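/- Let d ≥ 2 and let Ω, ρ be as in the context. There exists M = M(d) ≥ 1 and a constant C such that for every family {χ_j}_{j≥0} ⊂ 𝒴_M, every finite collection 𝔔 ⊆ 𝔇_{≥0} and every family F = {F_Q}_{Q∈𝔔} of L¹(ℝ^d) functions the following hold, with m_j(ξ) := χ_j(2^j(1−ρ(ξ))) and 𝔔_j := 𝔔 ∩ 𝔇_j: (i) for every integer s ≥ 0, ‖Σ_{j≥2s} 2^{j(d+1)/2} m_j(D)[Σ_{Q∈𝔔_{j−s}} F_Q 1_Q]‖_{L²} ≤ C · 2^{s(d+1)/2} · μ(𝔔)^{1/2} · sup_{Q∈𝔔}‖F_Q‖_{L¹}; (ii) for all integers j ≥ 0 and L with 0 < L ≤ j/2, ‖2^{j(d+1)/2} m_j(D)[Σ_{Q∈𝔔_L} F_Q 1_Q]‖_{L²} ≤ C · 2^{j(3d+1)/4 − Ld} · μ(𝔔)^{1/2} · sup_{Q∈𝔔}‖F_Q‖_{L¹}. -/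

import Mathlib

open MeasureTheory Filter
open scoped ENNReal NNReal RealInnerProductSpace BigOperators Topology

noncomputable section

/-- `ℝ^d` as a Euclidean space. -/
abbrev Euc (d : ℕ) : Type := EuclideanSpace ℝ (Fin d)

/-- The geometric setup: `Ω` is a bounded open convex subset of `ℝ^d` containing the origin,
`ρ` is its Minkowski functional, which is assumed to be smooth away from the origin and
positive away from the origin. -/
structure IsMinkowskiGauge (d : ℕ) (Ω : Set (Euc d)) (ρ : Euc d → ℝ) : Prop where
  isOpen : IsOpen Ω
  convex : Convex ℝ Ω
  isBounded : Bornology.IsBounded Ω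
  zero_mem : (0 : Euc d) ∈ Ω
  eq_gauge : ρ = gauge Ω
  smooth : ContDiffOn ℝ (⊤ : ℕ∞) ρ {(0 : Euc d)}ᶜ
  pos : ∀ ξ : Euc d, ξ ≠ 0 → 0 < ρ ξ

/-- Everywhere nonvanishing Gaussian curvature of `∂Ω = {ρ = 1}`: for every `ξ ≠ 0`
the Hessian of `ρ` at `ξ` has rank `d - 1`. -/
def HasNonvanishingCurvature (d : ℕ) (ρ : Euc d → ℝ) : Prop :=
  ∀ ξ : Euc d, ξ ≠ 0 →
    LinearMap.rank ((fderiv ℝ (fderiv ℝ ρ) ξ : Euc d →L[ℝ] (Euc d →L[ℝ] ℝ)) :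
      Euc d →ₗ[ℝ] (Euc d →L[ℝ] ℝ)) = (d - 1 : ℕ)

/-- The Fourier transform `f̂(ξ) = ∫ f(y) e^{−i⟨y,ξ⟩} dy` on `ℝ^d`. -/
def FTd {d : ℕ} (f : Euc d → ℂ) (ξ : Euc d) : ℂ :=
  ∫ y : Euc d, f y * Complex.exp (-(Complex.I * (⟪y, ξ⟫ : ℂ)))

/-- The Riesz mean `R^λ_{a,t} f(x) = (2π)^{-d} ∫ (1 - ρ(ξ)^a/t^a)_+^λ f̂(ξ) e^{i⟨x,ξ⟩} dξ`. -/
def RieszMean {d : ℕ} (ρ : Euc d → ℝ) (a lam t : ℝ) (f : Euc d → ℂ) (x : Euc d) : ℂ :=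
  (((2 * Real.pi) ^ d)⁻¹ : ℝ) •
    ∫ ξ : Euc d, ((max (1 - ρ ξ ^ a / t ^ a) 0) ^ lam : ℝ) •
      (FTd f ξ * Complex.exp (Complex.I * (⟪x, ξ⟫ : ℂ)))

/-- The critical index `λ(p) = d(1/p - 1/2) - 1/2`. -/
def criticalIndex (d : ℕ) (p : ℝ) : ℝ := (d : ℝ) * (1 / p - 1 / 2) - 1 / 2

/-- One-dimensional Fourier transform `φ̂(ϱ) = ∫ φ(s) e^{-isϱ} ds`. -/
def FT1 (φ : ℝ → ℂ) (ϱ : ℝ) : ℂ :=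
  ∫ s : ℝ, φ s * Complex.exp (-(Complex.I * (s : ℂ) * (ϱ : ℂ)))

/-- One-dimensional Fourier transform of a real-valued function. -/
def FT1R (Φ : ℝ → ℝ) : ℝ → ℂ := FT1 (fun s => (Φ s : ℂ))

/-- The pieces `h_{λ,ℓ}` of the decomposition of the Riesz multiplier. -/
def hfun (χ Φ Ψ : ℝ → ℝ) (lam : ℝ) : ℕ → ℝ → ℂ
  | 0 => fun ϱ => ((2 * Real.pi)⁻¹ * χ ϱ : ℝ) •
      ∫ u : ℝ, ((max (1 - u) 0) ^ lam : ℝ) • FT1R Φ (ϱ - u)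
  | (ℓ + 1) => fun ϱ => ((2 * Real.pi)⁻¹ * χ ϱ : ℝ) •
      ∫ u : ℝ, ((max (1 - u) 0) ^ lam : ℝ) •
        (((2 : ℝ) ^ ℓ) • FT1R Ψ ((2 : ℝ) ^ ℓ * (ϱ - u)))

/-- The data entering the construction of `h_{λ,ℓ}`: a cutoff `χ ∈ C_c^∞((1/2,2))`, an even
`Φ = Φ∘ ∈ C_c^∞(ℝ)` with `Φ∘ = 1` on `[-1/2,1/2]`, `supp Φ∘ ⊆ [-1,1]`, satisfying the moment
cancellation conditions, and `Ψ(x) = Φ∘(x/2) - Φ∘(x)`. -/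
structure HData (lam : ℝ) (N0 : ℕ) (χ Φ Ψ : ℝ → ℝ) : Prop where
  hχsm : ContDiff ℝ (⊤ : ℕ∞) χ
  hχsupp : Function.support χ ⊆ Set.Ioo (1/2 : ℝ) 2
  hΦsm : ContDiff ℝ (⊤ : ℕ∞) Φ
  hΦeven : ∀ s, Φ (-s) = Φ s
  hΦone : ∀ s : ℝ, |s| ≤ 1/2 → Φ s = 1
  hΦzero : ∀ s : ℝ, 1 ≤ |s| → Φ s = 0
  hΦcanc : ∀ j : ℕ, j ≤ N0 → (j : ℝ) ≠ lam →
    (∫ ϱ in Set.Ioi (0 : ℝ), ((ϱ ^ lam : ℝ) : ℂ) * iteratedDeriv j (FT1R Φ) ϱ) = 0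
  hΨ : Ψ = fun x => Φ (x / 2) - Φ x

/-- Inverse Fourier transform on `ℝ^d`. -/
def invFTd {d : ℕ} (m : Euc d → ℂ) (x : Euc d) : ℂ :=
  (((2 * Real.pi) ^ d)⁻¹ : ℝ) •
    ∫ ξ : Euc d, m ξ * Complex.exp (Complex.I * (⟪x, ξ⟫ : ℂ))

/-- The Fourier multiplier operator `m(D) f = (𝓕⁻¹ m) * f`. -/
def mulOp {d : ℕ} (m : Euc d → ℂ) (f : Euc d → ℂ) (x : Euc d) : ℂ :=
  ∫ y : Euc d, invFTd m (x - y) * f y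

/-- The Hardy–Littlewood maximal function. -/
def HLMaximal {d : ℕ} (w : Euc d → ℝ) (x : Euc d) : ℝ≥0∞ :=
  ⨆ r : {r : ℝ // 0 < r},
    (volume (Metric.ball x r.1))⁻¹ * ∫⁻ y in Metric.ball x r.1, ENNReal.ofReal (w y)

/-- `w` is an `A₁` weight. -/
structure IsA1Weight {d : ℕ} (w : Euc d → ℝ) : Prop where
  nonneg : ∀ x, 0 ≤ w x
  locInt : LocallyIntegrable w volume
  ne_zero : ¬ (w =ᵐ[(volume : Measure (Euc d))] (0 : Euc d → ℝ))
  maximal_le : ∃ C : ℝ, ∀ᵐ x ∂(volume : Measure (Euc d)),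
    HLMaximal w x ≤ ENNReal.ofReal (C * w x)

/-- `w` satisfies a reverse Hölder inequality with exponent `σ`. -/
def IsRH {d : ℕ} (σ : ℝ) (w : Euc d → ℝ) : Prop :=
  ∃ C : ℝ, ∀ (x : Euc d) (r : ℝ), 0 < r →
    ((volume (Metric.ball x r))⁻¹ *
        ∫⁻ y in Metric.ball x r, ENNReal.ofReal (w y) ^ σ) ^ (1 / σ) ≤
      ENNReal.ofReal C *
        ((volume (Metric.ball x r))⁻¹ * ∫⁻ y in Metric.ball x r, ENNReal.ofReal (w y))

/-- The weighted `L^p(w)` (quasi-)norm. -/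
def wLpNorm {d : ℕ} (p : ℝ) (w : Euc d → ℝ) (g : Euc d → ℂ) : ℝ≥0∞ :=
  (∫⁻ x, (‖g x‖₊ : ℝ≥0∞) ^ p * ENNReal.ofReal (w x)) ^ (1 / p)

/-- The weighted weak `L^{p,∞}(w)` (quasi-)norm. -/
def wWeakNorm {d : ℕ} (p : ℝ) (w : Euc d → ℝ) (g : Euc d → ℂ) : ℝ≥0∞ :=
  ⨆ α : {α : ℝ // 0 < α},
    ENNReal.ofReal α.1 *
      (∫⁻ x in {x : Euc d | α.1 < ‖g x‖}, ENNReal.ofReal (w x)) ^ (1 / p)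

/-- A (half-open, axes-parallel) cube `x + [0,s)^d` in `ℝ^d`. -/
def IsCube {d : ℕ} (Q : Set (Euc d)) : Prop :=
  ∃ (x : Euc d) (s : ℝ), 0 < s ∧ Q = {y : Euc d | ∀ i, y i ∈ Set.Ico (x i) (x i + s)}

/-- The average `⟨f⟩_{Q,p} = (|Q|⁻¹ ∫_Q |f|^p)^{1/p}`. -/
def cubeAvg {d : ℕ} (p : ℝ) (Q : Set (Euc d)) (f : Euc d → ℂ) : ℝ≥0∞ :=
  ((volume Q)⁻¹ * ∫⁻ x in Q, (‖f x‖₊ : ℝ≥0∞) ^ p) ^ (1 / p)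

/-- A `γ`-sparse (finite) family of cubes. -/
def IsSparseFamily {d : ℕ} (γ : ℝ) (𝔖 : Finset (Set (Euc d))) : Prop :=
  (∀ Q ∈ 𝔖, IsCube Q) ∧
  ∃ E : Set (Euc d) → Set (Euc d),
    (∀ Q ∈ 𝔖, MeasurableSet (E Q) ∧ E Q ⊆ Q ∧
      ENNReal.ofReal γ * volume Q ≤ volume (E Q)) ∧
    (𝔖 : Set (Set (Euc d))).Pairwise fun Q Q' => Disjoint (E Q) (E Q')

/-- The maximal sparse form `Λ*_{p,q}(f₁,f₂)` (supremum over `1/2`-sparse families). -/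
def sparseFormMax {d : ℕ} (p q : ℝ) (f₁ f₂ : Euc d → ℂ) : ℝ≥0∞ :=
  ⨆ 𝔖 : {𝔖 : Finset (Set (Euc d)) // IsSparseFamily (1/2) 𝔖},
    ∑ Q ∈ 𝔖.1, volume Q * cubeAvg p Q f₁ * cubeAvg q Q f₂

/-- The sparse bound `T ∈ Sp(p,q)`. -/
def SparseBound {d : ℕ} (p q : ℝ) (T : (Euc d → ℂ) → Euc d → ℂ) : Prop :=
  ∃ C : ℝ, ∀ f₁ f₂ : Euc d → ℂ,
    ContDiff ℝ (⊤ : ℕ∞) f₁ → HasCompactSupport f₁ →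
    ContDiff ℝ (⊤ : ℕ∞) f₂ → HasCompactSupport f₂ →
    ENNReal.ofReal ‖∫ x, T f₁ x * f₂ x‖ ≤ ENNReal.ofReal C * sparseFormMax p q f₁ f₂

/-- The exponent `r_*(p, p∘, r∘)`. -/
def rStar (d : ℕ) (p p0 r0 : ℝ) : ℝ :=
  if p ≤ 2 * ((d : ℝ) + 1) / ((d : ℝ) + 3) then
    (((d : ℝ) + 1) / ((d : ℝ) - 1) * (1 - 1 / p))⁻¹
  else
    ((1 / r0 * (((d : ℝ) + 3) / (2 * ((d : ℝ) + 1)) - 1 / p) +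
        1 / 2 * (1 / p - 1 / p0)) /
      (((d : ℝ) + 3) / (2 * ((d : ℝ) + 1)) - 1 / p0))⁻¹

/-- The exponent `q_*(p, p∘, r∘)`, the conjugate of `r_*(p, p∘, r∘)`. -/
def qStar (d : ℕ) (p p0 r0 : ℝ) : ℝ := (1 - 1 / rStar d p p0 r0)⁻¹

/-- The trapezoid `∏_d(λ)` with corners `P₁, P₂, P₃, P₄`. -/
def trapez (d : ℕ) (lam : ℝ) : Set (ℝ × ℝ) :=
  convexHull ℝ
    {((2*lam + (d:ℝ) + 1)/(2*(d:ℝ)), ((d:ℝ) - 2*lam - 1)/(2*(d:ℝ))),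
     ((2*lam + (d:ℝ) + 1)/(2*(d:ℝ)),
       ((d:ℝ) - 1)/(2*(d:ℝ)) + lam*((d:ℝ) + 1)/((d:ℝ)*((d:ℝ) - 1))),
     (((d:ℝ) - 1)/(2*(d:ℝ)) + lam*((d:ℝ) + 1)/((d:ℝ)*((d:ℝ) - 1)),
       (2*lam + (d:ℝ) + 1)/(2*(d:ℝ))),
     (((d:ℝ) - 2*lam - 1)/(2*(d:ℝ)), (2*lam + (d:ℝ) + 1)/(2*(d:ℝ)))}

/-- A dyadic cube `2^k(m + [0,1)^d)`, recorded by its generation `k` and position `m`. -/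
structure DyadicCube (d : ℕ) where
  k : ℤ
  m : Fin d → ℤ
deriving DecidableEq

/-- The subset of `ℝ^d` corresponding to a dyadic cube. -/
def DyadicCube.set {d : ℕ} (Q : DyadicCube d) : Set (Euc d) :=
  {x : Euc d | ∀ i, x i ∈ Set.Ico ((2:ℝ) ^ Q.k * (Q.m i : ℝ)) ((2:ℝ) ^ Q.k * ((Q.m i : ℝ) + 1))}

/-- `μ(𝔔) = Σ_{Q ∈ 𝔔} |Q|`. -/
def dyadicMeasure {d : ℕ} (𝔔 : Finset (DyadicCube d)) : ℝ≥0∞ :=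
  ∑ Q ∈ 𝔔, volume Q.set

/-- The class `𝒴_M` of normalized bump functions. -/
def MemYM (M : ℕ) (χ : ℝ → ℂ) : Prop :=
  ContDiff ℝ (M : ℕ∞) χ ∧ Function.support χ ⊆ Set.Ioo (1/2 : ℝ) 2 ∧
    ∑ ν ∈ Finset.range (M + 1), (⨆ s : ℝ, ‖iteratedDeriv ν χ s‖) ≤ 1

/-- The function `Σ_{j ≥ 1} 2^{j(d+1)/2} m_j(D)[Σ_{Q ∈ 𝔇_j} f_Q]` appearing in `VBR(p,r)`,
where `m_j(ξ) = χ_j(2^j(1 - ρ(ξ)))`. -/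
def vbrSum {d : ℕ} (ρ : Euc d → ℝ) (χ : ℕ → ℝ → ℂ) (𝔉 : Finset (DyadicCube d))
    (f : DyadicCube d → Euc d → ℂ) (x : Euc d) : ℂ :=
  Finset.sum ((𝔉.image (fun Q => Q.k)).filter (fun j => 1 ≤ j)) fun (j : ℤ) =>
    ((2:ℝ) ^ ((j : ℝ) * ((d : ℝ) + 1) / 2)) •
      mulOp (fun ξ => χ j.toNat ((2:ℝ) ^ j * (1 - ρ ξ)))
        (fun y => ∑ Q ∈ 𝔉.filter (fun Q' => Q'.k = j), f Q y) x

/-- The statement `VBR(p,r)`. -/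
def VBR (d : ℕ) (ρ : Euc d → ℝ) (p r : ℝ) : Prop :=
  ∃ (M : ℕ) (C : ℝ), 1 ≤ M ∧
    ∀ χ : ℕ → ℝ → ℂ, (∀ j : ℕ, 1 ≤ j → MemYM M (χ j)) →
    ∀ (𝔉 : Finset (DyadicCube d)) (f : DyadicCube d → Euc d → ℂ),
      (∀ Q ∈ 𝔉, Function.support (f Q) ⊆ closure Q.set) →
      eLpNorm (vbrSum ρ χ 𝔉 f) (ENNReal.ofReal r) volume ≤
        ENNReal.ofReal C *
          (∑ Q ∈ 𝔉, volume Q.set * eLpNorm (f Q) (ENNReal.ofReal p) volume ^ r) ^ (1 / r)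

/-- `Hyp(p∘, r∘)`: `VBR(p,r)` holds for all `p ∈ [2(d+1)/(d+3), p∘)`
and all `r ∈ [p, r_*(p,p∘,r∘))`. -/
def Hyp (d : ℕ) (ρ : Euc d → ℝ) (p0 r0 : ℝ) : Prop :=
  ∀ p r : ℝ, 2 * ((d : ℝ) + 1) / ((d : ℝ) + 3) ≤ p → p < p0 →
    p ≤ r → r < rStar d p p0 r0 → VBR d ρ p r

/-- The operator `A_{λ,ℓ} = 2^{ℓ(λ + (d+1)/2)} h_{λ,ℓ}(ρ(D))`. -/
def Aop {d : ℕ} (ρ : Euc d → ℝ) (h : ℕ → ℝ → ℂ) (lam : ℝ) (ℓ : ℕ)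
    (f : Euc d → ℂ) (x : Euc d) : ℂ :=
  ((2:ℝ) ^ ((ℓ : ℝ) * (lam + ((d : ℝ) + 1) / 2))) • mulOp (fun ξ => h ℓ (ρ ξ)) f x

/-- `𝒜_{s,𝔔} F = Σ_{ℓ ≥ s} Σ_{Q ∈ 𝔔_{ℓ-s}} A_{λ,ℓ}[F_Q 1_Q]`. -/
def AopSum {d : ℕ} (ρ : Euc d → ℝ) (h : ℕ → ℝ → ℂ) (lam : ℝ) (s : ℕ)
    (𝔔 : Finset (DyadicCube d)) (F : DyadicCube d → Euc d → ℂ) (x : Euc d) : ℂ :=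
  ∑ Q ∈ 𝔔, Aop ρ h lam (Q.k.toNat + s) (Q.set.indicator (F Q)) x

/-- `Ξ_{s,𝔔}[F,β] = Σ_{ℓ ≥ s} Σ_{Q ∈ 𝔔_{ℓ-s}} β(Q) A_{λ,ℓ}[F_Q 1_Q]`. -/
def XiSum {d : ℕ} (ρ : Euc d → ℝ) (h : ℕ → ℝ → ℂ) (lam : ℝ) (s : ℕ)
    (𝔔 : Finset (DyadicCube d)) (F : DyadicCube d → Euc d → ℂ)
    (β : DyadicCube d → ℂ) (x : Euc d) : ℂ :=
  ∑ Q ∈ 𝔔, β Q * Aop ρ h lam (Q.k.toNat + s) (Q.set.indicator (F Q)) x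

/-- `‖F‖_{ℓ^∞(L^p)} = sup_{Q ∈ 𝔔} ‖F_Q‖_{L^p}`. -/
def supLp {d : ℕ} (p : ℝ) (𝔔 : Finset (DyadicCube d))
    (F : DyadicCube d → Euc d → ℂ) : ℝ≥0∞ :=
  ⨆ Q ∈ 𝔔, eLpNorm (F Q) (ENNReal.ofReal p) volume

/-- `‖β‖_{ℓ^{r,1}(μ)} = ∫_0^∞ μ({Q ∈ 𝔔 : |β(Q)| > α})^{1/r} dα`. -/
def lorentzNorm {d : ℕ} (r : ℝ) (𝔔 : Finset (DyadicCube d))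
    (β : DyadicCube d → ℂ) : ℝ≥0∞ :=
  ∫⁻ α in Set.Ioi (0:ℝ),
    (∑ Q ∈ 𝔔, if α < ‖β Q‖ then volume Q.set else 0) ^ (1 / r)

/-!
Restricted to a ball of radius `2^{-k}`, the Fourier transform of a sum of functions supported on
disjoint cubes of side `2^k` has almost orthogonal pieces: multiplying by a Gaussian at the scale of
the ball and applying Plancherel, the local `L²` norm squared is at most the number of cubes times
the square of the largest `L¹` norm, up to the volume normalisation. Averaging over centres of balls
turns this into a bound on the shell `1 - 2^{1-k} < ρ < 1`, whose thickening has volume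
`O(2^{-k})` by convexity. The multipliers of scale `j = k + s` live in this shell and at most two of
them overlap at a given frequency, so Plancherel sums the single-scale bounds.
-/

open scoped FourierTransform

theorem exp_neg_mul_norm_sub_sq_le {V : Type*} [SeminormedAddCommGroup V] {b δ : ℝ}
    (hb : 0 ≤ b) {x y z : V} (hyz : dist y z ≤ δ) :
    Real.exp (-b * ‖y - x‖ ^ 2) ≤
      Real.exp (b * δ ^ 2) * Real.exp (-(b / 2) * ‖z - x‖ ^ 2) := by
  have htri : ‖z - x‖ ≤ ‖y - x‖ + δ := by
    rw [← dist_eq_norm, ← dist_eq_norm]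
    linarith [dist_triangle z y x, dist_comm y z]
  have hsq : ‖z - x‖ ^ 2 ≤ 2 * ‖y - x‖ ^ 2 + 2 * δ ^ 2 := by
    nlinarith [norm_nonneg (z - x), sq_nonneg (‖y - x‖ - δ)]
  rw [← Real.exp_add]
  exact Real.exp_le_exp.2 (by nlinarith)

theorem thickening_preimage_Ioo_subset {X : Type*} [PseudoMetricSpace X] {p : X → ℝ} {K : ℝ≥0}
    (hp : LipschitzWith K p) (a b r : ℝ) :
    Metric.thickening r (p ⁻¹' Set.Ioo a b) ⊆ p ⁻¹' Set.Ioo (a - K * r) (b + K * r) := by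
  intro x hx
  obtain ⟨y, ⟨hay, hyb⟩, hdist⟩ := Metric.mem_thickening_iff.1 hx
  have hxy : |p x - p y| ≤ K * r := (hp.dist_le_mul x y).trans (by gcongr)
  constructor <;> linarith [abs_le.1 hxy]

section Analytic

theorem differentiable_integral_mul_cexp {α : Type*} [MeasurableSpace α] {μ : Measure α}
    {w a : α → ℂ} (hw : Integrable w μ) (ha : AEStronglyMeasurable a μ) {B : ℝ}
    (hB : ∀ᵐ η ∂μ, w η ≠ 0 → ‖a η‖ ≤ B) :
    Differentiable ℂ fun z : ℂ => ∫ η, w η * Complex.exp (z * a η) ∂μ := by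
  intro z₀
  have hmeas : ∀ z : ℂ, AEStronglyMeasurable (fun η => w η * Complex.exp (z * a η)) μ := fun z =>
    hw.1.mul (Complex.continuous_exp.comp_aestronglyMeasurable (ha.const_mul z))
  have hexp : ∀ᵐ η ∂μ, ∀ z ∈ Metric.ball z₀ 1,
      ‖w η * Complex.exp (z * a η)‖ ≤ ‖w η‖ * Real.exp ((‖z₀‖ + 1) * |B|) := by
    filter_upwards [hB] with η hη z hz
    rcases eq_or_ne (w η) 0 with hw0 | hw0
    · simp [hw0]
    have hz' : ‖z‖ ≤ ‖z₀‖ + 1 := by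
      linarith [norm_le_norm_add_norm_sub' z z₀, mem_ball_iff_norm.1 hz]
    rw [norm_mul]
    gcongr
    refine (Complex.norm_exp_le_exp_norm _).trans (Real.exp_le_exp.2 ?_)
    rw [norm_mul]
    gcongr
    exact (hη hw0).trans (le_abs_self B)
  refine (hasDerivAt_integral_of_dominated_loc_of_deriv_le (𝕜 := ℂ) (μ := μ)
    (F' := fun z η => w η * Complex.exp (z * a η) * a η)
    (bound := fun η => ‖w η‖ * Real.exp ((‖z₀‖ + 1) * |B|) * |B|)
    (Metric.ball_mem_nhds z₀ one_pos) (Eventually.of_forall hmeas) ?_ ((hmeas z₀).mul ha) ?_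
    ((hw.norm.mul_const _).mul_const _) ?_).2.differentiableAt
  · refine (hw.norm.mul_const (Real.exp ((‖z₀‖ + 1) * |B|))).mono' (hmeas z₀) ?_
    filter_upwards [hexp] with η hη using hη z₀ (Metric.mem_ball_self one_pos)
  · filter_upwards [hB, hexp] with η hη hexpη z hz
    rcases eq_or_ne (w η) 0 with hw0 | hw0
    · simp [hw0]
    rw [norm_mul]
    gcongr
    exacts [hexpη z hz, (hη hw0).trans (le_abs_self B)]
  · refine ae_of_all _ fun η z _ => ?_
    have hderiv := ((hasDerivAt_mul_const (a η)).cexp (x := z)).const_mul (w η)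
    rwa [← mul_assoc] at hderiv

theorem ae_ne_zero_of_differentiable {Φ : ℂ → ℂ} (h : Differentiable ℂ Φ) {t₀ : ℝ}
    (h0 : Φ t₀ ≠ 0) : ∀ᵐ t : ℝ, Φ t ≠ 0 := by
  have han : AnalyticOnNhd ℝ (fun t : ℝ => Φ t) Set.univ := fun t _ =>
    (h.analyticAt (t : ℂ)).restrictScalars.comp (Complex.ofRealCLM.analyticAt t)
  have hcodiscrete := han.preimage_zero_mem_codiscrete (x := t₀) h0
  rw [← Measure.restrict_univ (μ := (volume : Measure ℝ))]
  exact ae_restrict_le_codiscreteWithin MeasurableSet.univ hcodiscrete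

theorem ae_ne_zero_of_forall_line {V E : Type*} [NormedAddCommGroup V] [NormedSpace ℝ V]
    [FiniteDimensional ℝ V] [MeasurableSpace V] [BorelSpace V] {μ : Measure V}
    [μ.IsAddHaarMeasure] [TopologicalSpace E] [T2Space E] [Zero E] {f : V → E}
    (hf : Continuous f) (x₀ : V) (hline : ∀ v, ∀ᵐ t : ℝ, f (x₀ + t • v) ≠ 0) :
    ∀ᵐ x ∂μ, f x ≠ 0 := by
  have hmeas : MeasurableSet {q : V × ℝ | f (x₀ + q.2 • q.1) ≠ 0} :=
    (isOpen_ne_fun (hf.comp (by fun_prop)) continuous_const).measurableSet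
  have hswap := (Measure.ae_ae_comm (μ := μ) (ν := volume)
    (p := fun v t => f (x₀ + t • v) ≠ 0) hmeas).1 (ae_of_all _ hline)
  obtain ⟨t, ht, ht₀⟩ := (hswap.and (Measure.ae_ne volume 0)).exists
  have hscale : ∀ᵐ y ∂μ, f (x₀ + y) ≠ 0 := by
    filter_upwards [(Measure.quasiMeasurePreserving_smul μ (inv_ne_zero ht₀)).ae ht] with y hy
    rwa [smul_inv_smul₀ ht₀] at hy
  filter_upwards [(measurePreserving_sub_right μ x₀).quasiMeasurePreserving.ae hscale] with x hx
  rwa [add_sub_cancel] at hx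

end Analytic

section Fourier

variable {V : Type*} [NormedAddCommGroup V] [InnerProductSpace ℝ V] [FiniteDimensional ℝ V]
  [MeasurableSpace V] [BorelSpace V]

section Plancherel

variable {E : Type*} [NormedAddCommGroup E]

theorem integral_fourier_smul_eq [NormedSpace ℂ E] [CompleteSpace E] {f : V → ℂ} {g : V → E}
    (hf : Integrable f) (hg : Integrable g) : ∫ ξ, 𝓕 f ξ • g ξ = ∫ x, f x • 𝓕 g x := by
  have := VectorFourier.integral_fourierIntegral_smul_eq_flip
    (L := innerₗ V) Real.continuous_fourierChar continuous_inner hf hg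
  rwa [flip_innerₗ] at this

theorem continuous_fourier [NormedSpace ℂ E] {f : V → E} (hf : Integrable f) :
    Continuous (𝓕 f) :=
  VectorFourier.fourierIntegral_continuous Real.continuous_fourierChar continuous_inner hf

theorem norm_fourier_le [NormedSpace ℂ E] (f : V → E) (ξ : V) : ‖𝓕 f ξ‖ ≤ ∫ x, ‖f x‖ :=
  VectorFourier.norm_fourierIntegral_le_integral_norm _ _ _ _ _

variable [InnerProductSpace ℂ E] [CompleteSpace E]

theorem fourier_toLp_ae_eq {f : V → E} (hf : Integrable f) (hf₂ : MemLp f 2) :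
    (𝓕 (hf₂.toLp f) : Lp E 2) =ᵐ[volume] 𝓕 f := by
  refine ae_eq_of_integral_contDiff_smul_eq
    ((Lp.memLp _).locallyIntegrable one_le_two) (continuous_fourier hf).locallyIntegrable
    fun g hg hgc => ?_
  let φ : SchwartzMap V ℂ := (hgc.comp_left (g := Complex.ofRealCLM) (map_zero _)).toSchwartzMap
    (Complex.ofRealCLM.contDiff.comp hg)
  have hφ : ∀ x (v : E), g x • v = φ x • v := fun x v => (Complex.coe_smul (g x) v).symm
  have hdistr := congrArg (· φ) (Lp.fourier_toTemperedDistribution_eq (hf₂.toLp f))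
  simp only [TemperedDistribution.fourier_apply, Lp.toTemperedDistribution_apply] at hdistr
  calc ∫ x, g x • (𝓕 (hf₂.toLp f) : Lp E 2 (volume : Measure V)) x = ∫ x, 𝓕 φ x • hf₂.toLp f x := by
        simp_rw [hφ, hdistr]
    _ = ∫ x, 𝓕 (φ : V → ℂ) x • f x := integral_congr_ae <| by
        filter_upwards [hf₂.coeFn_toLp] with x hx
        rw [hx, SchwartzMap.fourier_coe]
    _ = ∫ x, g x • 𝓕 f x := by
        simp_rw [integral_fourier_smul_eq φ.integrable hf, hφ]

theorem eLpNorm_fourier {f : V → E} (hf : Integrable f) (hf₂ : MemLp f 2) :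
    eLpNorm (𝓕 f) 2 = eLpNorm f 2 := by
  rw [← eLpNorm_congr_ae (fourier_toLp_ae_eq hf hf₂), ← eLpNorm_congr_ae hf₂.coeFn_toLp,
    ← Lp.enorm_def, ← Lp.enorm_def, ← ofReal_norm, ← ofReal_norm, Lp.norm_fourier_eq]

theorem eLpNorm_fourierInv {f : V → E} (hf : Integrable f) (hf₂ : MemLp f 2) :
    eLpNorm (𝓕⁻ f) 2 = eLpNorm f 2 := by
  rw [← eLpNorm_fourier hf hf₂, funext (Real.fourierInv_eq_fourier_neg f)]
  exact eLpNorm_comp_measurePreserving (g := 𝓕 f) (continuous_fourier hf).aestronglyMeasurable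
    (Measure.measurePreserving_neg volume)

end Plancherel

section Gaussian

open scoped ComplexConjugate

theorem fourierInv_smul_fourier {E : Type*} [NormedAddCommGroup E] [NormedSpace ℂ E]
    [CompleteSpace E] {w : V → ℂ} {g : V → E} (hw : Integrable w) (hg : Integrable g) (x : V) :
    𝓕⁻ (fun ξ => w ξ • 𝓕 g ξ) x = ∫ y, 𝓕⁻ w (x - y) • g y := by
  have hmod : ∀ y, 𝓕 (fun ξ => Real.fourierChar ⟪ξ, x⟫ • w ξ) y = 𝓕⁻ w (x - y) := fun y => by
    simp_rw [Real.fourier_eq, Real.fourierInv_eq, smul_smul, ← AddChar.map_add_eq_mul,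
      inner_sub_right, sub_eq_neg_add]
  have hint : Integrable fun ξ => Real.fourierChar ⟪ξ, x⟫ • w ξ :=
    hw.congr' (by fun_prop) (by simp)
  simp_rw [← hmod, integral_fourier_smul_eq hint hg, Real.fourierInv_eq, smul_assoc]

theorem conj_fourierInv (f : V → ℂ) (ξ : V) :
    conj (𝓕⁻ f ξ) = 𝓕 (fun x : V => conj (f x)) ξ := by
  rw [Real.fourier_eq, Real.fourierInv_eq, ← integral_conj]
  congr! 2
  rw [Circle.smul_def, Circle.smul_def, smul_eq_mul, smul_eq_mul, map_mul, starRingEnd_apply,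
    Circle.star_addChar]

theorem lintegral_weight_mul_enorm_fourier_sq_le {w : V → ℝ} (hw : Integrable w) (hw₀ : 0 ≤ w)
    {f : V → ℂ} (hf : Integrable f) :
    ∫⁻ ξ, ENNReal.ofReal (w ξ) * ‖𝓕 f ξ‖ₑ ^ 2 ≤
      ∫⁻ x, ‖f x‖ₑ * ∫⁻ y, ‖𝓕⁻ (fun ξ => (w ξ : ℂ)) (x - y)‖ₑ * ‖f y‖ₑ := by
  have hw' : Integrable fun ξ => (w ξ : ℂ) := hw.ofReal
  have hint : Integrable fun ξ => (w ξ : ℂ) * 𝓕 f ξ :=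
    hw'.mul_bdd (c := ∫ x, ‖f x‖) (continuous_fourier hf).aestronglyMeasurable
      (ae_of_all _ (norm_fourier_le f))
  have hint' : Integrable fun ξ => conj ((w ξ : ℂ) * 𝓕 f ξ) :=
    hint.congr' (Complex.continuous_conj.comp_aestronglyMeasurable hint.1) (by simp)
  have hkernel : ∀ x, ‖𝓕 (fun ξ => conj ((w ξ : ℂ) * 𝓕 f ξ)) x‖ₑ ≤
      ∫⁻ y, ‖𝓕⁻ (fun ξ => (w ξ : ℂ)) (x - y)‖ₑ * ‖f y‖ₑ := fun x => by
    rw [← conj_fourierInv, RCLike.enorm_conj]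
    refine (congrArg _ (fourierInv_smul_fourier hw' hf x)).trans_le ?_
    exact (enorm_integral_le_lintegral_enorm _).trans_eq (by simp only [enorm_smul])
  have hsq : ∀ ξ, 𝓕 f ξ * conj ((w ξ : ℂ) * 𝓕 f ξ) = ((w ξ * ‖𝓕 f ξ‖ ^ 2 : ℝ) : ℂ) := fun ξ => by
    rw [map_mul, Complex.conj_ofReal, mul_left_comm, Complex.mul_conj']
    push_cast
    rfl
  have hsq_nonneg : ∀ ξ, 0 ≤ w ξ * ‖𝓕 f ξ‖ ^ 2 := fun ξ => mul_nonneg (hw₀ ξ) (sq_nonneg _)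
  have hsq_int : Integrable fun ξ => w ξ * ‖𝓕 f ξ‖ ^ 2 := by
    simpa only [hsq, RCLike.re_eq_complex_re, Complex.ofReal_re] using
      (hint'.bdd_mul (continuous_fourier hf).aestronglyMeasurable
        (ae_of_all _ (norm_fourier_le f))).re
  calc ∫⁻ ξ, ENNReal.ofReal (w ξ) * ‖𝓕 f ξ‖ₑ ^ 2
      = ENNReal.ofReal (∫ ξ, w ξ * ‖𝓕 f ξ‖ ^ 2) := by
        rw [ofReal_integral_eq_lintegral_ofReal hsq_int (ae_of_all _ hsq_nonneg)]
        simp_rw [ENNReal.ofReal_mul (hw₀ _), ENNReal.ofReal_pow (norm_nonneg _), ofReal_norm]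
    _ = ‖∫ ξ, 𝓕 f ξ * conj ((w ξ : ℂ) * 𝓕 f ξ)‖ₑ := by
        simp_rw [hsq, integral_complex_ofReal, ← ofReal_norm, Complex.norm_real,
          Real.norm_of_nonneg (integral_nonneg hsq_nonneg)]
    _ = ‖∫ x, f x * 𝓕 (fun ξ => conj ((w ξ : ℂ) * 𝓕 f ξ)) x‖ₑ := by
        simpa only [smul_eq_mul] using congrArg _ (integral_fourier_smul_eq hf hint')
    _ ≤ ∫⁻ x, ‖f x‖ₑ * ∫⁻ y, ‖𝓕⁻ (fun ξ => (w ξ : ℂ)) (x - y)‖ₑ * ‖f y‖ₑ := by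
        refine (enorm_integral_le_lintegral_enorm _).trans (lintegral_mono fun x => ?_)
        rw [enorm_mul]
        gcongr
        exact hkernel x

theorem integrable_exp_neg_mul_norm_sub_sq {b : ℝ} (hb : 0 < b) (x : V) :
    Integrable fun y => Real.exp (-b * ‖y - x‖ ^ 2) := by
  have := (GaussianFourier.integrable_cexp_neg_mul_sq_norm_add (V := V) (b := b) (by simpa) 0 0).re
  simp only [zero_mul, add_zero, ← Complex.ofReal_pow, ← Complex.ofReal_neg, ← Complex.ofReal_mul,
    ← Complex.ofReal_exp, RCLike.re_eq_complex_re, Complex.ofReal_re] at this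
  exact this.comp_sub_right x

theorem lintegral_exp_neg_mul_norm_sub_sq {b : ℝ} (hb : 0 < b) (x : V) :
    ∫⁻ y, ENNReal.ofReal (Real.exp (-b * ‖y - x‖ ^ 2)) =
      ENNReal.ofReal ((Real.pi / b) ^ (Module.finrank ℝ V / 2 : ℝ)) := by
  rw [← ofReal_integral_eq_lintegral_ofReal (integrable_exp_neg_mul_norm_sub_sq hb x)
    (ae_of_all _ fun _ => Real.exp_nonneg _),
    integral_sub_right_eq_self (fun y => Real.exp (-b * ‖y‖ ^ 2)),
    GaussianFourier.integral_rexp_neg_mul_sq_norm hb]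

theorem enorm_fourierInv_comp_sub_right (f : V → ℂ) (ζ x : V) :
    ‖𝓕⁻ (fun ξ => f (ξ - ζ)) x‖ₑ = ‖𝓕⁻ f x‖ₑ := by
  have := congrFun (VectorFourier.fourierIntegral_comp_add_right Real.fourierChar volume
    (-innerₗ V) f (-ζ)) x
  simp only [Function.comp_def, ← sub_eq_add_neg] at this
  refine (congrArg _ this).trans ?_
  rw [← ofReal_norm, Circle.norm_smul, ofReal_norm]
  rfl

theorem fourierInv_gaussian {b : ℝ} (hb : 0 < b) (x : V) :
    𝓕⁻ (fun ξ : V => (Real.exp (-b * ‖ξ‖ ^ 2) : ℂ)) x =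
      ((Real.pi / b) ^ (Module.finrank ℝ V / 2 : ℝ) *
        Real.exp (-Real.pi ^ 2 * ‖x‖ ^ 2 / b) : ℝ) := by
  have hb' : 0 ≤ Real.pi / b := by positivity
  have := fourier_gaussian_innerProductSpace' (b := b) (by simpa) (0 : V) (-x)
  rw [Real.fourierInv_eq_fourier_neg]
  push_cast [Complex.ofReal_cpow hb']
  simpa using this

theorem enorm_fourierInv_gaussian_ball {r : ℝ} (hr : 0 < r) (ζ x : V) :
    ‖𝓕⁻ (fun ξ : V => (Real.exp (-(Real.pi / r ^ 2) * ‖ξ - ζ‖ ^ 2) : ℂ)) x‖ₑ =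
      ENNReal.ofReal (r ^ Module.finrank ℝ V) *
        ENNReal.ofReal (Real.exp (-(Real.pi * r ^ 2) * ‖x‖ ^ 2)) := by
  have hscale : Real.pi / (Real.pi / r ^ 2) = r ^ 2 := by field_simp
  rw [enorm_fourierInv_comp_sub_right
    (fun ξ : V => (Real.exp (-(Real.pi / r ^ 2) * ‖ξ‖ ^ 2) : ℂ)) ζ x,
    fourierInv_gaussian (by positivity), ← ofReal_norm, Complex.norm_real,
    Real.norm_of_nonneg (by positivity), hscale, ← ENNReal.ofReal_mul (by positivity),
    ← Real.rpow_natCast_mul hr.le]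
  congr 2
  · rw [← Real.rpow_natCast]; congr 1; push_cast; ring
  · congr 1; field_simp

theorem setLIntegral_ball_enorm_fourier_sq_le_weight {f : V → ℂ} {r : ℝ} (hr : 0 < r) (ζ : V) :
    ∫⁻ ξ in Metric.ball ζ r, ‖𝓕 f ξ‖ₑ ^ 2 ≤ ENNReal.ofReal (Real.exp Real.pi) *
      ∫⁻ ξ, ENNReal.ofReal (Real.exp (-(Real.pi / r ^ 2) * ‖ξ - ζ‖ ^ 2)) * ‖𝓕 f ξ‖ₑ ^ 2 := by
  rw [← lintegral_const_mul' _ _ (by finiteness)]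
  refine (setLIntegral_mono' measurableSet_ball fun ξ hξ => ?_).trans
    (setLIntegral_le_lintegral _ _)
  rw [← mul_assoc, ← ENNReal.ofReal_mul (Real.exp_nonneg _), ← Real.exp_add]
  refine le_mul_of_one_le_left' (ENNReal.one_le_ofReal.2 (Real.one_le_exp ?_))
  have hξr : ‖ξ - ζ‖ ^ 2 / r ^ 2 ≤ 1 :=
    div_le_one_of_le₀ (by gcongr; exact (mem_ball_iff_norm.1 hξ).le) (by positivity)
  calc 0 ≤ Real.pi * (1 - ‖ξ - ζ‖ ^ 2 / r ^ 2) := mul_nonneg Real.pi_nonneg (sub_nonneg.2 hξr)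
    _ = Real.pi + -(Real.pi / r ^ 2) * ‖ξ - ζ‖ ^ 2 := by ring

theorem setLIntegral_ball_enorm_fourier_sq_le {f : V → ℂ} (hf : Integrable f) {r : ℝ} (hr : 0 < r)
    (ζ : V) :
    ∫⁻ ξ in Metric.ball ζ r, ‖𝓕 f ξ‖ₑ ^ 2 ≤
      ENNReal.ofReal (Real.exp Real.pi * r ^ Module.finrank ℝ V) *
        ∫⁻ x, ‖f x‖ₑ * ∫⁻ y, ‖f y‖ₑ *
          ENNReal.ofReal (Real.exp (-(Real.pi * r ^ 2) * ‖y - x‖ ^ 2)) := by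
  refine (setLIntegral_ball_enorm_fourier_sq_le_weight hr ζ).trans ?_
  rw [ENNReal.ofReal_mul (Real.exp_nonneg _), mul_assoc]
  gcongr
  refine (lintegral_weight_mul_enorm_fourier_sq_le
    (integrable_exp_neg_mul_norm_sub_sq (by positivity) ζ)
    (fun _ => Real.exp_nonneg _) hf).trans_eq ?_
  rw [← lintegral_const_mul' _ _ (by finiteness)]
  congr! 2 with x
  simp_rw [enorm_fourierInv_gaussian_ball hr ζ, norm_sub_rev x]
  simp_rw [mul_assoc, mul_comm _ ‖f _‖ₑ]
  rw [lintegral_const_mul' _ _ (by finiteness), mul_left_comm]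

end Gaussian

section Packing

variable {ι : Type*} {S : Finset ι} {E : ι → Set V} {δ : ℝ} {v : ℝ≥0∞}

/-- A finite family of pairwise disjoint measurable sets, each of diameter at most `δ` and of
volume at least `v`: the geometry of a family of dyadic cubes of a common generation. -/
structure IsPacking (S : Finset ι) (E : ι → Set V) (δ : ℝ) (v : ℝ≥0∞) : Prop where
  measurableSet : ∀ i ∈ S, MeasurableSet (E i)
  pairwiseDisjoint : (S : Set ι).PairwiseDisjoint E
  dist_le : ∀ i ∈ S, ∀ x ∈ E i, ∀ y ∈ E i, dist x y ≤ δ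
  le_volume : ∀ i ∈ S, v ≤ volume (E i)

namespace IsPacking

theorem lintegral_eq_sum (hE : IsPacking S E δ v) {h : V → ℝ≥0∞}
    (hsupp : Function.support h ⊆ ⋃ i ∈ S, E i) : ∫⁻ x, h x = ∑ i ∈ S, ∫⁻ x in E i, h x := by
  rw [← lintegral_biUnion_finset hE.pairwiseDisjoint hE.measurableSet,
    setLIntegral_eq_of_support_subset hsupp]

theorem volume_mul_setLIntegral_mul_gaussian_le (hE : IsPacking S E δ v) {h : V → ℝ≥0∞} {A : ℝ≥0∞}
    {i : ι} (hi : i ∈ S) (hA : ∫⁻ y in E i, h y ≤ A) {b : ℝ} (hb : 0 ≤ b) (x : V) :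
    v * ∫⁻ y in E i, h y * ENNReal.ofReal (Real.exp (-b * ‖y - x‖ ^ 2)) ≤
      A * ENNReal.ofReal (Real.exp (b * δ ^ 2)) *
        ∫⁻ z in E i, ENNReal.ofReal (Real.exp (-(b / 2) * ‖z - x‖ ^ 2)) := by
  calc v * ∫⁻ y in E i, h y * ENNReal.ofReal (Real.exp (-b * ‖y - x‖ ^ 2))
      ≤ ∫⁻ _z in E i, ∫⁻ y in E i, h y * ENNReal.ofReal (Real.exp (-b * ‖y - x‖ ^ 2)) := by
        rw [setLIntegral_const, mul_comm]
        gcongr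
        exact hE.le_volume i hi
    _ ≤ ∫⁻ z in E i, ∫⁻ y in E i, h y * (ENNReal.ofReal (Real.exp (b * δ ^ 2)) *
          ENNReal.ofReal (Real.exp (-(b / 2) * ‖z - x‖ ^ 2))) := by
        refine setLIntegral_mono' (hE.measurableSet i hi) fun z hz =>
          setLIntegral_mono' (hE.measurableSet i hi) fun y hy => ?_
        rw [← ENNReal.ofReal_mul (Real.exp_nonneg _)]
        gcongr
        exact exp_neg_mul_norm_sub_sq_le hb (hE.dist_le i hi y hy z hz)
    _ ≤ ∫⁻ z in E i, A * ENNReal.ofReal (Real.exp (b * δ ^ 2)) *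
          ENNReal.ofReal (Real.exp (-(b / 2) * ‖z - x‖ ^ 2)) := by
        gcongr with z
        rw [lintegral_mul_const' _ _ (by finiteness), mul_assoc]
        gcongr
    _ = _ := lintegral_const_mul _ (by fun_prop)

theorem volume_mul_lintegral_mul_gaussian_le (hE : IsPacking S E δ v) {h : V → ℝ≥0∞} {A : ℝ≥0∞}
    (hsupp : Function.support h ⊆ ⋃ i ∈ S, E i) (hA : ∀ i ∈ S, ∫⁻ y in E i, h y ≤ A)
    {b : ℝ} (hb : 0 < b) (x : V) :
    v * ∫⁻ y, h y * ENNReal.ofReal (Real.exp (-b * ‖y - x‖ ^ 2)) ≤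
      A * ENNReal.ofReal (Real.exp (b * δ ^ 2)) *
        ENNReal.ofReal ((2 * Real.pi / b) ^ (Module.finrank ℝ V / 2 : ℝ)) := by
  have hsupp' : Function.support (fun y => h y * ENNReal.ofReal (Real.exp (-b * ‖y - x‖ ^ 2))) ⊆
      ⋃ i ∈ S, E i := (Function.support_mul_subset_left _ _).trans hsupp
  rw [hE.lintegral_eq_sum hsupp', Finset.mul_sum]
  calc ∑ i ∈ S, v * ∫⁻ y in E i, h y * ENNReal.ofReal (Real.exp (-b * ‖y - x‖ ^ 2))
      ≤ ∑ i ∈ S, A * ENNReal.ofReal (Real.exp (b * δ ^ 2)) *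
          ∫⁻ z in E i, ENNReal.ofReal (Real.exp (-(b / 2) * ‖z - x‖ ^ 2)) :=
        Finset.sum_le_sum fun i hi =>
          hE.volume_mul_setLIntegral_mul_gaussian_le hi (hA i hi) hb.le x
    _ ≤ A * ENNReal.ofReal (Real.exp (b * δ ^ 2)) *
          ∫⁻ z, ENNReal.ofReal (Real.exp (-(b / 2) * ‖z - x‖ ^ 2)) := by
        rw [← Finset.mul_sum, ← lintegral_biUnion_finset hE.pairwiseDisjoint hE.measurableSet]
        gcongr
        exact Measure.restrict_le_self
    _ = _ := by
        rw [lintegral_exp_neg_mul_norm_sub_sq (half_pos hb),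
          show Real.pi / (b / 2) = 2 * Real.pi / b by field_simp]

theorem lintegral_le_card_mul (hE : IsPacking S E δ v) {h : V → ℝ≥0∞} {A : ℝ≥0∞}
    (hsupp : Function.support h ⊆ ⋃ i ∈ S, E i) (hA : ∀ i ∈ S, ∫⁻ y in E i, h y ≤ A) :
    ∫⁻ x, h x ≤ S.card * A := by
  rw [hE.lintegral_eq_sum hsupp, ← nsmul_eq_mul]
  exact Finset.sum_le_card_nsmul _ _ _ hA

theorem volume_mul_lintegral_lintegral_gaussian_le (hE : IsPacking S E δ v) {h : V → ℝ≥0∞}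
    (hh : AEMeasurable h) {A : ℝ≥0∞} (hsupp : Function.support h ⊆ ⋃ i ∈ S, E i)
    (hA : ∀ i ∈ S, ∫⁻ y in E i, h y ≤ A) {b : ℝ} (hb : 0 < b) :
    v * ∫⁻ x, h x * ∫⁻ y, h y * ENNReal.ofReal (Real.exp (-b * ‖y - x‖ ^ 2)) ≤
      ENNReal.ofReal (Real.exp (b * δ ^ 2) * (2 * Real.pi / b) ^ (Module.finrank ℝ V / 2 : ℝ)) *
        (S.card * A ^ 2) := by
  rw [ENNReal.ofReal_mul (Real.exp_nonneg _)]
  set K := ENNReal.ofReal (Real.exp (b * δ ^ 2)) *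
    ENNReal.ofReal ((2 * Real.pi / b) ^ (Module.finrank ℝ V / 2 : ℝ)) with hK
  calc v * ∫⁻ x, h x * ∫⁻ y, h y * ENNReal.ofReal (Real.exp (-b * ‖y - x‖ ^ 2))
      ≤ ∫⁻ x, h x * (v * ∫⁻ y, h y * ENNReal.ofReal (Real.exp (-b * ‖y - x‖ ^ 2))) := by
        simp_rw [mul_left_comm (h _) v]
        exact lintegral_const_mul_le _ _
    _ ≤ ∫⁻ x, h x * (A * K) := by
        refine lintegral_mono fun x => mul_le_mul_right ?_ _
        rw [hK, ← mul_assoc A]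
        exact hE.volume_mul_lintegral_mul_gaussian_le hsupp hA hb x
    _ ≤ S.card * A * (A * K) := by
        rw [lintegral_mul_const'' _ hh]
        gcongr
        exact hE.lintegral_le_card_mul hsupp hA
    _ = K * (S.card * A ^ 2) := by ring

theorem volume_mul_setLIntegral_ball_enorm_fourier_sq_le (hE : IsPacking S E δ v) {f : V → ℂ}
    (hf : Integrable f) {A : ℝ≥0∞} (hsupp : Function.support f ⊆ ⋃ i ∈ S, E i)
    (hA : ∀ i ∈ S, ∫⁻ y in E i, ‖f y‖ₑ ≤ A) {r : ℝ} (hr : 0 < r) (ζ : V) :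
    v * ∫⁻ ξ in Metric.ball ζ r, ‖𝓕 f ξ‖ₑ ^ 2 ≤
      ENNReal.ofReal (2 ^ (Module.finrank ℝ V / 2 : ℝ) *
        Real.exp (Real.pi * (1 + r ^ 2 * δ ^ 2))) * (S.card * A ^ 2) := by
  set n := Module.finrank ℝ V
  have hsupp' : Function.support (fun y => ‖f y‖ₑ) ⊆ ⋃ i ∈ S, E i := by
    simpa only [Function.support_subset_iff', enorm_eq_zero] using hsupp
  have hscale : (2 * Real.pi / (Real.pi * r ^ 2)) ^ (n / 2 : ℝ) = 2 ^ (n / 2 : ℝ) / r ^ n := by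
    rw [show 2 * Real.pi / (Real.pi * r ^ 2) = 2 / r ^ 2 by field_simp,
      Real.div_rpow zero_le_two (by positivity), ← Real.rpow_natCast_mul hr.le,
      ← Real.rpow_natCast r n]
    congr 2
    push_cast
    ring
  calc v * ∫⁻ ξ in Metric.ball ζ r, ‖𝓕 f ξ‖ₑ ^ 2
      ≤ ENNReal.ofReal (Real.exp Real.pi * r ^ n) * (v * ∫⁻ x, ‖f x‖ₑ * ∫⁻ y, ‖f y‖ₑ *
          ENNReal.ofReal (Real.exp (-(Real.pi * r ^ 2) * ‖y - x‖ ^ 2))) := by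
        rw [← mul_left_comm v]
        gcongr
        exact setLIntegral_ball_enorm_fourier_sq_le hf hr ζ
    _ ≤ ENNReal.ofReal (Real.exp Real.pi * r ^ n) * (ENNReal.ofReal
          (Real.exp (Real.pi * r ^ 2 * δ ^ 2) * (2 * Real.pi / (Real.pi * r ^ 2)) ^ (n / 2 : ℝ)) *
          (S.card * A ^ 2)) := by
        refine mul_le_mul_right ?_ _
        exact hE.volume_mul_lintegral_lintegral_gaussian_le hf.1.enorm hsupp' hA (by positivity)
    _ = _ := by
        rw [← mul_assoc, ← ENNReal.ofReal_mul (by positivity), hscale, mul_add, Real.exp_add]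
        congr 2
        field_simp

end IsPacking

end Packing

section Annulus

open scoped Pointwise

theorem volume_ball_mul_setLIntegral_le {G : V → ℝ≥0∞} (hG : Measurable G) {T : Set V}
    (hT : MeasurableSet T) {r : ℝ} {B : ℝ≥0∞} (hB : ∀ ζ, ∫⁻ ξ in Metric.ball ζ r, G ξ ≤ B) :
    volume (Metric.ball (0 : V) r) * ∫⁻ ξ in T, G ξ ≤ volume (Metric.thickening r T) * B := by
  let k : V → V → ℝ≥0∞ := fun ξ ζ => (Metric.ball ξ r).indicator (fun _ => G ξ) ζ
  have hk : Measurable (Function.uncurry k) :=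
    (hG.comp measurable_fst).indicator
      (isOpen_lt (continuous_snd.dist continuous_fst) continuous_const).measurableSet
  have hk_left : ∀ ξ ∈ T, ∫⁻ ζ in Metric.thickening r T, k ξ ζ =
      volume (Metric.ball (0 : V) r) * G ξ := fun ξ hξ => by
    rw [setLIntegral_indicator measurableSet_ball, setLIntegral_const, mul_comm,
      Set.inter_eq_left.2 (Metric.ball_subset_thickening hξ r), Measure.addHaar_ball_center]
  have hk_right : ∀ ζ, (fun ξ => k ξ ζ) = (Metric.ball ζ r).indicator G :=
    fun ζ => funext fun ξ => Set.indicator_eq_indicator Metric.mem_ball_comm rfl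
  calc volume (Metric.ball (0 : V) r) * ∫⁻ ξ in T, G ξ
      = ∫⁻ ξ in T, ∫⁻ ζ in Metric.thickening r T, k ξ ζ := by
        rw [← lintegral_const_mul _ hG, setLIntegral_congr_fun hT hk_left]
    _ = ∫⁻ ζ in Metric.thickening r T, ∫⁻ ξ in T, k ξ ζ :=
        lintegral_lintegral_swap hk.aemeasurable
    _ ≤ ∫⁻ _ζ in Metric.thickening r T, B := by
        refine lintegral_mono fun ζ => (setLIntegral_le_lintegral _ _).trans ?_
        simp only [hk_right, lintegral_indicator measurableSet_ball]
        exact hB ζ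
    _ = volume (Metric.thickening r T) * B := by rw [setLIntegral_const, mul_comm]

theorem volume_gauge_lt [Nontrivial V] (s : Set V) {t : ℝ} (ht : 0 ≤ t) :
    volume {x | gauge s x < t} =
      ENNReal.ofReal (t ^ Module.finrank ℝ V) * volume {x | gauge s x < 1} := by
  rcases ht.eq_or_lt with rfl | ht
  · simp [(gauge_nonneg _).not_gt, Module.finrank_pos.ne']
  have hsmul : {x | gauge s x < t} = t • {x | gauge s x < 1} := by
    ext x
    rw [Set.mem_smul_set_iff_inv_smul_mem₀ ht.ne', Set.mem_ofPred_eq, Set.mem_ofPred_eq,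
      gauge_smul_of_nonneg (by positivity), smul_eq_mul, inv_mul_lt_iff₀ ht, mul_one]
  rw [hsmul, Measure.addHaar_smul, abs_of_pos (by positivity)]

theorem volume_gauge_preimage_Ioo_le [Nontrivial V] {s : Set V} (hs : Continuous (gauge s))
    (hfin : volume {x | gauge s x < 1} ≠ ⊤) {a b : ℝ} (hab : a ≤ b) (hb : 0 ≤ b) :
    volume (gauge s ⁻¹' Set.Ioo a b) ≤
      ENNReal.ofReal ((b - a) * Module.finrank ℝ V * b ^ (Module.finrank ℝ V - 1)) *
        volume {x | gauge s x < 1} := by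
  set n := Module.finrank ℝ V
  set a' := max 0 a
  have ha' : 0 ≤ a' := le_max_left _ _
  have hab' : a' ≤ b := max_le hb hab
  have hpow : b ^ n - a' ^ n ≤ (b - a) * n * b ^ (n - 1) := by
    refine (le_abs_self _).trans ((abs_pow_sub_pow_le b a' n).trans ?_)
    rw [abs_of_nonneg (sub_nonneg.2 hab'), abs_of_nonneg hb, abs_of_nonneg ha', max_eq_left hab']
    gcongr
    exact le_max_right _ _
  calc volume (gauge s ⁻¹' Set.Ioo a b)
      ≤ volume ({x | gauge s x < b} \ {x | gauge s x < a'}) :=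
        measure_mono fun x hx => ⟨hx.2, (max_le (gauge_nonneg _) hx.1.le).not_gt⟩
    _ = ENNReal.ofReal (b ^ n - a' ^ n) * volume {x | gauge s x < 1} := by
        rw [measure_sdiff (Set.ofPred_subset_ofPred.2 fun x hx => hx.trans_le hab')
            (isOpen_lt hs continuous_const).measurableSet.nullMeasurableSet,
          volume_gauge_lt s hb, volume_gauge_lt s ha', ENNReal.ofReal_sub _ (by positivity),
          ENNReal.sub_mul fun _ _ => hfin]
        rw [volume_gauge_lt s ha']
        finiteness
    _ ≤ _ := by gcongr

theorem exists_volume_thickening_gauge_annulus_le [Nontrivial V] {s : Set V} (hs : Convex ℝ s)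
    (hb : Bornology.IsBounded s) (h0 : s ∈ 𝓝 0) :
    ∃ C : ℝ≥0, ∀ r : ℝ, 0 < r → r ≤ 1 →
      volume (Metric.thickening r (gauge s ⁻¹' Set.Ioo (1 - 2 * r) 1)) ≤
        C * ENNReal.ofReal r := by
  obtain ⟨ε, hε, hball⟩ := Metric.mem_nhds_iff.1 h0
  obtain ⟨K, hK⟩ : ∃ K, LipschitzWith K (gauge s) :=
    ⟨_, hs.lipschitzWith_gauge (r := ⟨ε, hε.le⟩) hε hball⟩
  have hfin : volume {x | gauge s x < 1} ≠ ⊤ := ((hb.subset (setOfPred_gauge_lt_one_subset_self hs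
    (mem_of_mem_nhds h0) (absorbent_nhds_zero h0))).measure_lt_top).ne
  set n := Module.finrank ℝ V
  refine ⟨((2 + 2 * K) * n * (1 + K) ^ (n - 1)) * (volume {x | gauge s x < 1}).toNNReal,
    fun r hr hr₁ => ?_⟩
  have hKr : 0 ≤ K * r := by positivity
  calc volume (Metric.thickening r (gauge s ⁻¹' Set.Ioo (1 - 2 * r) 1))
      ≤ ENNReal.ofReal ((1 + K * r - (1 - 2 * r - K * r)) * n * (1 + K * r) ^ (n - 1)) *
          volume {x | gauge s x < 1} :=
        (measure_mono (thickening_preimage_Ioo_subset hK _ _ r)).trans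
          (volume_gauge_preimage_Ioo_le hK.continuous hfin (by linarith) (by positivity))
    _ ≤ ENNReal.ofReal (r * ((2 + 2 * K) * n * (1 + K) ^ (n - 1) : ℝ≥0)) *
          volume {x | gauge s x < 1} := by
        push_cast
        rw [show 1 + K * r - (1 - 2 * r - K * r) = r * (2 + 2 * K) by ring, mul_assoc, mul_assoc,
          mul_assoc]
        gcongr
        exact mul_le_of_le_one_right K.2 hr₁
    _ = _ := by
        rw [ENNReal.ofReal_mul hr.le, ENNReal.ofReal_coe_nnreal,
          ENNReal.coe_mul _ (ENNReal.toNNReal _), ENNReal.coe_toNNReal hfin]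
        ring

theorem IsPacking.exists_volume_mul_setLIntegral_gauge_annulus_le [Nontrivial V] {s : Set V}
    (hs : Convex ℝ s) (hb : Bornology.IsBounded s) (h0 : s ∈ 𝓝 0) (κ : ℝ) :
    ∃ C : ℝ≥0, ∀ {ι : Type*} {S : Finset ι} {E : ι → Set V} {δ : ℝ} {v : ℝ≥0∞},
      IsPacking S E δ v → ∀ {f : V → ℂ}, Integrable f → Function.support f ⊆ ⋃ i ∈ S, E i →
      ∀ {A : ℝ≥0∞}, (∀ i ∈ S, ∫⁻ y in E i, ‖f y‖ₑ ≤ A) →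
      ∀ {r : ℝ}, 0 < r → r ≤ 1 → r * δ = κ →
        ENNReal.ofReal (r ^ Module.finrank ℝ V) * v *
            ∫⁻ ξ in (gauge s ⁻¹' Set.Ioo (1 - 2 * r) 1), ‖𝓕 f ξ‖ₑ ^ 2 ≤
          C * ENNReal.ofReal r * (S.card * A ^ 2) := by
  obtain ⟨C, hC⟩ := exists_volume_thickening_gauge_annulus_le hs hb h0
  set n := Module.finrank ℝ V
  set ω := volume (Metric.ball (0 : V) 1)
  have hω₀ : ω ≠ 0 := (Metric.measure_ball_pos _ _ one_pos).ne'
  have hω : ω ≠ ⊤ := measure_ball_lt_top.ne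
  set D : ℝ := 2 ^ (n / 2 : ℝ) * Real.exp (Real.pi * (1 + κ ^ 2))
  refine ⟨ω.toNNReal⁻¹ * C * D.toNNReal,
    fun {ι S E δ v} hE {f} hf hsupp {A} hA {r} hr hr₁ hκ => ?_⟩
  set T := gauge s ⁻¹' Set.Ioo (1 - 2 * r) 1
  have hfm : Measurable fun ξ => ‖𝓕 f ξ‖ₑ ^ 2 :=
    (continuous_fourier hf).measurable.enorm.pow_const 2
  have hball : ∀ ζ, ∫⁻ ξ in Metric.ball ζ r, v * ‖𝓕 f ξ‖ₑ ^ 2 ≤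
      ENNReal.ofReal D * (S.card * A ^ 2) := fun ζ => by
    rw [lintegral_const_mul _ hfm, show D = _ * _ from rfl, ← hκ, mul_pow]
    exact hE.volume_mul_setLIntegral_ball_enorm_fourier_sq_le hf hsupp hA hr ζ
  calc ENNReal.ofReal (r ^ n) * v * ∫⁻ ξ in T, ‖𝓕 f ξ‖ₑ ^ 2
      = ω⁻¹ * (volume (Metric.ball (0 : V) r) * ∫⁻ ξ in T, v * ‖𝓕 f ξ‖ₑ ^ 2) := by
        rw [lintegral_const_mul _ hfm, Measure.addHaar_ball_of_pos _ _ hr,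
          mul_comm (ENNReal.ofReal _) ω, mul_assoc ω, ← mul_assoc ω⁻¹,
          ENNReal.inv_mul_cancel hω₀ hω, one_mul, mul_assoc]
    _ ≤ ω⁻¹ * (C * ENNReal.ofReal r * (ENNReal.ofReal D * (S.card * A ^ 2))) := by
        refine mul_le_mul_right ((volume_ball_mul_setLIntegral_le (hfm.const_mul v)
          ((continuous_gauge hs h0).measurable measurableSet_Ioo) hball).trans ?_) _
        gcongr
        exact hC r hr hr₁
    _ = _ := by
        rw [ENNReal.coe_mul, ENNReal.coe_mul,
          ENNReal.coe_inv (by simp [hω₀, hω, ENNReal.toNNReal_eq_zero_iff]),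
          ENNReal.coe_toNNReal hω]
        simp only [ENNReal.ofReal]
        ring

end Annulus

section AnalyticKernel

theorem continuous_fourierInv {E : Type*} [NormedAddCommGroup E] [NormedSpace ℂ E] {f : V → E}
    (hf : Integrable f) : Continuous (𝓕⁻ f) := by
  rw [funext (Real.fourierInv_eq_fourier_neg f)]
  exact (continuous_fourier hf).comp continuous_neg

theorem exists_differentiable_fourierInv_line_eq {u : V → ℂ} (hu : Integrable u)
    (hsupp : HasCompactSupport u) (x₀ v : V) :
    ∃ Φ : ℂ → ℂ, Differentiable ℂ Φ ∧ ∀ t : ℝ, 𝓕⁻ u (x₀ + t • v) = Φ t := by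
  obtain ⟨R, hR⟩ := hsupp.isCompact.isBounded.exists_norm_le
  have hint : Integrable fun η => Real.fourierChar ⟪η, x₀⟫ • u η :=
    hu.congr' (by fun_prop) (by simp)
  refine ⟨_, differentiable_integral_mul_cexp
    (a := fun η => ((2 * Real.pi * ⟪η, v⟫ : ℝ) : ℂ) * Complex.I) (B := 2 * Real.pi * (R * ‖v‖))
    hint (by fun_prop) (ae_of_all _ fun η hη => ?_), fun t => ?_⟩
  · have hηR : ‖η‖ ≤ R := hR η (subset_tsupport u fun h => hη (by rw [h, smul_zero]))
    rw [norm_mul, Complex.norm_I, mul_one, Complex.norm_real, norm_mul,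
      Real.norm_of_nonneg (by positivity)]
    gcongr
    exact (norm_inner_le_norm _ _).trans (by gcongr)
  · rw [Real.fourierInv_eq]
    congr! 2
    simp only [inner_add_right, inner_smul_right, AddChar.map_add_eq_mul, mul_smul,
      Circle.smul_def, smul_eq_mul, Real.fourierChar_apply]
    push_cast
    ring_nf

theorem fourierInv_eq_zero_or_ae_ne_zero {u : V → ℂ} (hu : Integrable u)
    (hsupp : HasCompactSupport u) : 𝓕⁻ u = 0 ∨ ∀ᵐ x, 𝓕⁻ u x ≠ 0 := by
  refine or_iff_not_imp_left.2 fun h => ?_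
  obtain ⟨x₀, hx₀⟩ := Function.ne_iff.1 h
  refine ae_ne_zero_of_forall_line (continuous_fourierInv hu) x₀ fun v => ?_
  obtain ⟨Φ, hΦ, heq⟩ := exists_differentiable_fourierInv_line_eq hu hsupp x₀ v
  simp_rw [heq]
  refine ae_ne_zero_of_differentiable hΦ (t₀ := 0) ?_
  rwa [← heq, zero_smul, add_zero]

end AnalyticKernel

section Overlap

theorem enorm_sum_sq_le_card_mul_sum {ι E : Type*} [NormedAddCommGroup E] (s : Finset ι)
    (a : ι → E) : ‖∑ i ∈ s, a i‖ₑ ^ 2 ≤ s.card * ∑ i ∈ s, ‖a i‖ₑ ^ 2 := by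
  have h := ENNReal.rpow_sum_le_const_mul_sum_rpow s (fun i => ‖a i‖ₑ) one_le_two
  norm_num at h
  exact (pow_le_pow_left' (enorm_sum_le s a) 2).trans h

theorem fourierInv_finset_sum {ι : Type*} {I : Finset ι} {G : ι → V → ℂ}
    (hG : ∀ i ∈ I, Integrable (G i)) (x : V) :
    𝓕⁻ (fun η => ∑ i ∈ I, G i η) x = ∑ i ∈ I, 𝓕⁻ (G i) x := by
  simp only [Real.fourierInv_eq, Finset.smul_sum]
  exact integral_finsetSum _ fun i hi => (hG i hi).congr' (by
    have := (hG i hi).1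
    fun_prop) (by simp)

theorem eLpNorm_two_sq {E : Type*} [NormedAddCommGroup E] (f : V → E) :
    eLpNorm f 2 volume ^ 2 = ∫⁻ x, ‖f x‖ₑ ^ 2 := by
  simpa using eLpNorm_nnreal_pow_eq_lintegral (f := f) (μ := volume) (p := 2) two_ne_zero

theorem eLpNorm_sum_fourierInv_sq_le {ι : Type*} {I : Finset ι} {G : ι → V → ℂ} {N : ℕ}
    (hc : ∀ i ∈ I, Continuous (G i)) (hs : ∀ i ∈ I, HasCompactSupport (G i))
    (hN : ∀ η, (I.filter fun i => G i η ≠ 0).card ≤ N) :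
    eLpNorm (fun x => ∑ i ∈ I, 𝓕⁻ (G i) x) 2 volume ^ 2 ≤
      N * ∑ i ∈ I, ∫⁻ η, ‖G i η‖ₑ ^ 2 := by
  have hGc : Continuous fun η => ∑ i ∈ I, G i η := continuous_finsetSum I hc
  have hGs : HasCompactSupport fun η => ∑ i ∈ I, G i η :=
    .intro (I.isCompact_biUnion hs) fun η hη => Finset.sum_eq_zero fun i hi =>
      image_eq_zero_of_notMem_tsupport fun h => hη (Set.mem_biUnion hi h)
  simp_rw [← fourierInv_finset_sum fun i hi => (hc i hi).integrable_of_hasCompactSupport (hs i hi)]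
  calc eLpNorm (𝓕⁻ fun η => ∑ i ∈ I, G i η) 2 volume ^ 2
      = ∫⁻ η, ‖∑ i ∈ I, G i η‖ₑ ^ 2 := by
        rw [eLpNorm_fourierInv (hGc.integrable_of_hasCompactSupport hGs)
          (hGc.memLp_of_hasCompactSupport hGs), eLpNorm_two_sq]
    _ ≤ ∫⁻ η, N * ∑ i ∈ I, ‖G i η‖ₑ ^ 2 := lintegral_mono fun η => by
        dsimp only
        rw [← Finset.sum_filter_ne_zero]
        refine (enorm_sum_sq_le_card_mul_sum _ _).trans ?_
        gcongr
        · exact hN η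
        · exact Finset.filter_subset _ _
    _ = N * ∑ i ∈ I, ∫⁻ η, ‖G i η‖ₑ ^ 2 := by
        have hm : ∀ i ∈ I, Measurable fun η => ‖G i η‖ₑ ^ 2 := fun i hi =>
          ((hc i hi).enorm.measurable).pow_const 2
        rw [lintegral_const_mul _ (Finset.measurable_fun_sum I hm), lintegral_finsetSum I hm]

end Overlap

end Fourier

section MulOp

variable {d : ℕ}

theorem invFTd_eq_fourierInv (m : Euc d → ℂ) (x : Euc d) :
    invFTd m x = 𝓕⁻ (fun η : Euc d => m ((2 * Real.pi) • η)) x := by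
  have h := Measure.integral_comp_smul (volume : Measure (Euc d))
    (fun ξ => m ξ * Complex.exp (Complex.I * (⟪x, ξ⟫ : ℂ))) (2 * Real.pi)
  rw [finrank_euclideanSpace_fin, abs_of_pos (by positivity)] at h
  rw [invFTd, Real.fourierInv_eq', ← h]
  congr! 2 with η
  rw [smul_eq_mul, mul_comm, ← real_inner_comm η x, inner_smul_right]
  push_cast
  ring_nf

theorem mulOp_eq_fourierInv {m f : Euc d → ℂ} (hm : Integrable m) (hf : Integrable f)
    (x : Euc d) : mulOp m f x = 𝓕⁻ (fun η : Euc d => m ((2 * Real.pi) • η) • 𝓕 f η) x := by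
  simp_rw [fourierInv_smul_fourier (hm.comp_smul (by positivity : 2 * Real.pi ≠ 0)) hf, mulOp,
    invFTd_eq_fourierInv, smul_eq_mul]

-- The kernel of `m(D)` vanishes only on a null set (or everywhere), so convolving it against a
-- function that is not measurable gives the junk value `0` of the Bochner integral.
theorem mulOp_eq_zero_of_not_aestronglyMeasurable {m g : Euc d → ℂ} (hm : Integrable m)
    (hsupp : HasCompactSupport m) (hg : ¬ AEStronglyMeasurable g volume) (x : Euc d) :
    mulOp m g x = 0 := by
  have hπ : 2 * Real.pi ≠ 0 := by positivity
  have hm' := hm.comp_smul hπ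
  simp_rw [mulOp, invFTd_eq_fourierInv]
  rcases fourierInv_eq_zero_or_ae_ne_zero hm' (hsupp.comp_smul hπ) with h | h
  · simp [h]
  refine integral_non_aestronglyMeasurable fun hprod => hg ?_
  have hinv : AEStronglyMeasurable
      (fun y => (𝓕⁻ (fun η : Euc d => m ((2 * Real.pi) • η)) (x - y))⁻¹) volume :=
    ((continuous_fourierInv hm').measurable.comp
      (measurable_const.sub measurable_id)).inv.aestronglyMeasurable
  refine (hinv.mul hprod).congr ?_
  filter_upwards [(quasiMeasurePreserving_sub_left volume x).ae h] with y hy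
  exact inv_mul_cancel_left₀ hy _

theorem exists_integrable_mulOp_eq_fourierInv {g : Euc d → ℂ} (hg : HasFiniteIntegral g) :
    ∃ f : Euc d → ℂ, Integrable f ∧ (∀ y, ‖f y‖ₑ ≤ ‖g y‖ₑ) ∧
      ∀ m : Euc d → ℂ, Integrable m → HasCompactSupport m →
        mulOp m g = 𝓕⁻ fun η : Euc d => m ((2 * Real.pi) • η) • 𝓕 f η := by
  by_cases hmeas : AEStronglyMeasurable g volume
  · exact ⟨g, ⟨hmeas, hg⟩, fun _ => le_rfl, fun m hm _ =>
      funext (mulOp_eq_fourierInv hm ⟨hmeas, hg⟩)⟩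
  · refine ⟨0, integrable_zero _ _ _, by simp, fun m hm hsupp => funext fun x => ?_⟩
    rw [← mulOp_eq_fourierInv hm (integrable_zero _ _ _),
      mulOp_eq_zero_of_not_aestronglyMeasurable hm hsupp hmeas]
    simp [mulOp]

end MulOp

section DyadicCubes

variable {d : ℕ}

namespace DyadicCube

theorem set_eq_preimage (Q : DyadicCube d) : Q.set = WithLp.ofLp ⁻¹' Set.pi Set.univ fun i =>
    Set.Ico ((2 : ℝ) ^ Q.k * Q.m i) ((2 : ℝ) ^ Q.k * (Q.m i + 1)) := by
  ext x
  simp [DyadicCube.set]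

theorem measurableSet_set (Q : DyadicCube d) : MeasurableSet Q.set := by
  rw [set_eq_preimage]
  exact (PiLp.volume_preserving_ofLp (Fin d)).measurable
    (.univ_pi fun _ => measurableSet_Ico)

theorem volume_set (Q : DyadicCube d) : volume Q.set = ENNReal.ofReal (((2 : ℝ) ^ Q.k) ^ d) := by
  rw [set_eq_preimage, (PiLp.volume_preserving_ofLp (Fin d)).measure_preimage
    (MeasurableSet.univ_pi fun _ => measurableSet_Ico).nullMeasurableSet, Real.volume_pi_Ico]
  simp [mul_add, ENNReal.ofReal_pow (show (0 : ℝ) ≤ 2 ^ Q.k by positivity)]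

theorem disjoint_set {Q Q' : DyadicCube d} (hk : Q.k = Q'.k) (hne : Q ≠ Q') :
    Disjoint Q.set Q'.set := by
  obtain ⟨k, m⟩ := Q
  obtain ⟨k', m'⟩ := Q'
  obtain rfl : k = k' := hk
  refine Set.disjoint_left.2 fun x hx hx' => hne ?_
  congr
  ext i
  have h₁ := lt_of_mul_lt_mul_left ((hx i).1.trans_lt (hx' i).2) (by positivity)
  have h₂ := lt_of_mul_lt_mul_left ((hx' i).1.trans_lt (hx i).2) (by positivity)
  norm_cast at h₁ h₂
  lia

theorem dist_le (Q : DyadicCube d) {y z : Euc d} (hy : y ∈ Q.set) (hz : z ∈ Q.set) :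
    dist y z ≤ √d * (2 : ℝ) ^ Q.k := by
  have hcoord : ∀ i, dist (y i) (z i) ≤ (2 : ℝ) ^ Q.k := fun i =>
    (Real.dist_le_of_mem_Icc (Set.Ico_subset_Icc_self (hy i))
      (Set.Ico_subset_Icc_self (hz i))).trans_eq (by ring)
  calc dist y z = √(∑ i, dist (y i) (z i) ^ 2) := EuclideanSpace.dist_eq y z
    _ ≤ √(∑ _i : Fin d, ((2 : ℝ) ^ Q.k) ^ 2) := by gcongr; exact hcoord _
    _ = √d * (2 : ℝ) ^ Q.k := by
      simp [Real.sqrt_sq (by positivity : (0 : ℝ) ≤ 2 ^ Q.k)]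

end DyadicCube

/-- The members of generation `k` of a family of dyadic cubes: the paper's `𝔔_k = 𝔔 ∩ 𝔇_k`. -/
def generation (𝔔 : Finset (DyadicCube d)) (k : ℤ) : Finset (DyadicCube d) :=
  𝔔.filter fun Q => Q.k = k

/-- The function `∑_{Q ∈ 𝔔_k} F_Q 1_Q` to which a multiplier of a fixed scale is applied. -/
def generationSum (𝔔 : Finset (DyadicCube d)) (F : DyadicCube d → Euc d → ℂ) (k : ℤ)
    (y : Euc d) : ℂ :=
  ∑ Q ∈ generation 𝔔 k, Q.set.indicator (F Q) y

variable {𝔔 : Finset (DyadicCube d)} {F : DyadicCube d → Euc d → ℂ} {k : ℤ}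

theorem isPacking_generation (𝔔 : Finset (DyadicCube d)) (k : ℤ) :
    IsPacking (generation 𝔔 k) DyadicCube.set (√d * (2 : ℝ) ^ k)
      (ENNReal.ofReal (((2 : ℝ) ^ k) ^ d)) := by
  have hk : ∀ Q ∈ generation 𝔔 k, Q.k = k := fun Q hQ => (Finset.mem_filter.1 hQ).2
  refine ⟨fun Q _ => Q.measurableSet_set, fun Q hQ Q' hQ' hne =>
    DyadicCube.disjoint_set ((hk Q hQ).trans (hk Q' hQ').symm) hne, fun Q hQ y hy z hz => ?_,
    fun Q hQ => ?_⟩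
  · exact hk Q hQ ▸ Q.dist_le hy hz
  · rw [Q.volume_set, hk Q hQ]

theorem dyadicMeasure_generation (𝔔 : Finset (DyadicCube d)) (k : ℤ) :
    dyadicMeasure (generation 𝔔 k) =
      (generation 𝔔 k).card * ENNReal.ofReal (((2 : ℝ) ^ k) ^ d) := by
  rw [dyadicMeasure, Finset.sum_congr rfl fun Q hQ => ?_, Finset.sum_const, nsmul_eq_mul]
  rw [Q.volume_set, (Finset.mem_filter.1 hQ).2]

theorem sum_dyadicMeasure_generation_le (𝔔 : Finset (DyadicCube d)) (I : Finset ℤ) :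
    ∑ k ∈ I, dyadicMeasure (generation 𝔔 k) ≤ dyadicMeasure 𝔔 := by
  have h := Finset.sum_fiberwise_eq_sum_filter 𝔔 I DyadicCube.k fun Q => volume Q.set
  exact h.trans_le (Finset.sum_le_sum_of_subset (Finset.filter_subset _ _))

theorem dyadicMeasure_pos (h𝔔 : 𝔔.Nonempty) : 0 < dyadicMeasure 𝔔 := by
  obtain ⟨Q, hQ⟩ := h𝔔
  refine lt_of_lt_of_le ?_ (Finset.single_le_sum (fun _ _ => zero_le) hQ)
  rw [Q.volume_set, ENNReal.ofReal_pos]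
  positivity

theorem support_generationSum_subset :
    Function.support (generationSum 𝔔 F k) ⊆ ⋃ Q ∈ generation 𝔔 k, Q.set := fun y hy => by
  obtain ⟨Q, hQ, hne⟩ := Finset.exists_ne_zero_of_sum_ne_zero hy
  exact Set.mem_biUnion hQ (Set.mem_of_indicator_ne_zero hne)

theorem generationSum_eq_of_mem {Q : DyadicCube d} (hQ : Q ∈ generation 𝔔 k) {y : Euc d}
    (hy : y ∈ Q.set) : generationSum 𝔔 F k y = F Q y := by
  rw [generationSum, Finset.sum_eq_single_of_mem Q hQ fun Q' hQ' hne => ?_,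
    Set.indicator_of_mem hy]
  exact Set.indicator_of_notMem (fun hy' => Set.disjoint_left.1
    ((isPacking_generation 𝔔 k).pairwiseDisjoint hQ' hQ hne) hy' hy) _

theorem setLIntegral_enorm_le_supLp {Q : DyadicCube d} (hQ : Q ∈ 𝔔) (s : Set (Euc d)) :
    ∫⁻ y in s, ‖F Q y‖ₑ ≤ supLp 1 𝔔 F := by
  refine (setLIntegral_le_lintegral _ _).trans ?_
  rw [← eLpNorm_one_eq_lintegral_enorm, supLp, ENNReal.ofReal_one]
  exact le_iSup₂ (f := fun Q (_ : Q ∈ 𝔔) => eLpNorm (F Q) 1 volume) Q hQ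

theorem setLIntegral_enorm_generationSum_le {Q : DyadicCube d} (hQ : Q ∈ generation 𝔔 k) :
    ∫⁻ y in Q.set, ‖generationSum 𝔔 F k y‖ₑ ≤ supLp 1 𝔔 F := by
  refine (setLIntegral_mono' Q.measurableSet_set fun y hy => ?_).trans
    (setLIntegral_enorm_le_supLp (Finset.mem_filter.1 hQ).1 Q.set)
  rw [generationSum_eq_of_mem hQ hy]

theorem hasFiniteIntegral_generationSum (hF : supLp 1 𝔔 F ≠ ⊤) :
    HasFiniteIntegral (generationSum 𝔔 F k) := by
  refine ((isPacking_generation 𝔔 k).lintegral_le_card_mul (A := supLp 1 𝔔 F) ?_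
    fun Q hQ => setLIntegral_enorm_generationSum_le hQ).trans_lt (by finiteness)
  exact fun y hy => support_generationSum_subset (F := F) fun h => hy (by simp [h])

theorem mul_rpow_dyadicMeasure_mul_supLp_eq_top (h : supLp 1 𝔔 F = ⊤) {a : ℝ} (ha : 0 < a)
    {θ : ℝ} (hθ : 0 ≤ θ) :
    ENNReal.ofReal a * dyadicMeasure 𝔔 ^ θ * supLp 1 𝔔 F = ⊤ := by
  have h𝔔 : 𝔔.Nonempty := Finset.nonempty_iff_ne_empty.2 fun h0 => by simp [h0, supLp] at h
  have hμ := ENNReal.rpow_pos_of_nonneg (dyadicMeasure_pos h𝔔) hθ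
  rw [h, ENNReal.mul_top (mul_ne_zero (ENNReal.ofReal_pos.2 ha).ne' hμ.ne')]

end DyadicCubes

section Shell

namespace MemYM

variable {M : ℕ} {χ : ℝ → ℂ}

theorem mono {N : ℕ} (hMN : M ≤ N) (h : MemYM N χ) : MemYM M χ :=
  ⟨h.1.of_le (by exact_mod_cast hMN), h.2.1, (Finset.sum_le_sum_of_subset_of_nonneg
    (by simpa using hMN) fun _ _ _ => Real.iSup_nonneg fun _ => norm_nonneg _).trans h.2.2⟩

theorem continuous (h : MemYM M χ) : Continuous χ := h.1.continuous

theorem norm_le_one (h : MemYM M χ) (t : ℝ) : ‖χ t‖ ≤ 1 := by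
  have hsum : ⨆ t, ‖χ t‖ ≤ 1 := by simpa using (h.mono M.zero_le).2.2
  have hsupp : HasCompactSupport χ :=
    .of_support_subset_isCompact isCompact_Icc (h.2.1.trans Set.Ioo_subset_Icc_self)
  obtain ⟨B, hB⟩ := h.continuous.bounded_above_of_compact_support hsupp
  exact (le_ciSup ⟨B, Set.forall_mem_range.2 hB⟩ t).trans hsum

end MemYM

theorem card_filter_zpow_mul_mem_Ioo_le_two (I : Finset ℤ) (x : ℝ) :
    (I.filter fun k => (2 : ℝ) ^ k * x ∈ Set.Ioo (1 / 2) 2).card ≤ 2 := by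
  set J := I.filter fun k => (2 : ℝ) ^ k * x ∈ Set.Ioo (1 / 2) 2
  have hJ : ∀ k ∈ J, (2 : ℝ) ^ k * x ∈ Set.Ioo (1 / 2) 2 := fun k hk => (Finset.mem_filter.1 hk).2
  rcases J.eq_empty_or_nonempty with hJ₀ | hJ₀
  · simp [hJ₀]
  set k₀ := J.min' hJ₀
  have h₀ := hJ k₀ (J.min'_mem hJ₀)
  have hx : 0 < x := pos_of_mul_pos_right (one_half_pos.trans h₀.1) (by positivity)
  have hsub : J ⊆ Finset.Icc k₀ (k₀ + 1) := fun k hk => by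
    have hlt : (2 : ℝ) ^ k < 2 ^ (k₀ + 2) := by
      rw [zpow_add₀ two_ne_zero]
      refine lt_of_mul_lt_mul_right ((hJ k hk).2.trans_le ?_) hx.le
      norm_num
      linarith [h₀.1]
    have := (zpow_lt_zpow_iff_right₀ one_lt_two).1 hlt
    exact Finset.mem_Icc.2 ⟨J.min'_le k hk, by lia⟩
  exact (Finset.card_le_card hsub).trans (by rw [Int.card_Icc]; lia)

/-- The symbol `χ (2^j (1 - p ξ))`, a bump at distance `∼ 2^{-j}` inside the level set `p = 1`;
for `p = ρ` this is the paper's `m_j`. -/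
def shellMultiplier {X : Type*} (p : X → ℝ) (χ : ℝ → ℂ) (j : ℤ) (ξ : X) : ℂ :=
  χ ((2 : ℝ) ^ j * (1 - p ξ))

variable {X : Type*} {p : X → ℝ} {M : ℕ} {χ : ℝ → ℂ} {j : ℤ}

theorem zpow_mul_one_sub_mem_Ioo_of_shellMultiplier_ne_zero (hχ : MemYM M χ) {ξ : X}
    (h : shellMultiplier p χ j ξ ≠ 0) : (2 : ℝ) ^ j * (1 - p ξ) ∈ Set.Ioo (1 / 2) 2 :=
  hχ.2.1 h

theorem support_shellMultiplier_subset (hχ : MemYM M χ) :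
    Function.support (shellMultiplier p χ j) ⊆ p ⁻¹' Set.Ioo (1 - 2 * (2 : ℝ) ^ (-j)) 1 :=
  fun ξ hξ => by
  obtain ⟨h₁, h₂⟩ := zpow_mul_one_sub_mem_Ioo_of_shellMultiplier_ne_zero hχ hξ
  have hpos : 0 < 1 - p ξ := pos_of_mul_pos_right (one_half_pos.trans h₁) (by positivity)
  rw [← lt_div_iff₀' (by positivity), div_eq_mul_inv, ← zpow_neg] at h₂
  constructor <;> linarith

theorem continuous_shellMultiplier [TopologicalSpace X] (hp : Continuous p) (hχ : MemYM M χ) :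
    Continuous (shellMultiplier p χ j) :=
  hχ.continuous.comp (continuous_const.mul (continuous_const.sub hp))

theorem hasCompactSupport_shellMultiplier_gauge {E : Type*} [NormedAddCommGroup E]
    [NormedSpace ℝ E] [ProperSpace E] {s : Set E} (hs : Convex ℝ s) (hb : Bornology.IsBounded s)
    (h0 : s ∈ 𝓝 0) (hχ : MemYM M χ) : HasCompactSupport (shellMultiplier (gauge s) χ j) := by
  refine .of_support_subset_isCompact hb.isCompact_closure fun ξ hξ => subset_closure ?_
  exact setOfPred_gauge_lt_one_subset_self hs (mem_of_mem_nhds h0) (absorbent_nhds_zero h0)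
    (support_shellMultiplier_subset hχ hξ).2

end Shell

section ShellEstimates

variable {V : Type*} [NormedAddCommGroup V] [InnerProductSpace ℝ V] [FiniteDimensional ℝ V]
  [MeasurableSpace V] [BorelSpace V]

theorem lintegral_enorm_shellMultiplier_mul_sq_le {p : V → ℝ} (hp : Continuous p) {M : ℕ}
    {χ : ℝ → ℂ} (hχ : MemYM M χ) {k j : ℤ} (hkj : k ≤ j) (c : ℝ) (g : V → ℂ) :
    ∫⁻ η, ‖c • (shellMultiplier p χ j η • g η)‖ₑ ^ 2 ≤ ENNReal.ofReal (c ^ 2) *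
      ∫⁻ η in p ⁻¹' Set.Ioo (1 - 2 * (2 : ℝ) ^ (-k)) 1, ‖g η‖ₑ ^ 2 := by
  set T := p ⁻¹' Set.Ioo (1 - 2 * (2 : ℝ) ^ (-k)) 1
  have hT : MeasurableSet T := (isOpen_Ioo.preimage hp).measurableSet
  rw [← lintegral_const_mul' _ _ (by finiteness), ← lintegral_indicator hT]
  refine lintegral_mono fun η => ?_
  by_cases hη : η ∈ T
  · have hc : ENNReal.ofReal (c ^ 2) = ‖c‖ₑ ^ 2 := by
      rw [← sq_abs, ENNReal.ofReal_pow (abs_nonneg c), Real.enorm_eq_ofReal_abs]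
    have hw : ‖shellMultiplier p χ j η‖ₑ ≤ 1 := by
      rw [← ofReal_norm, ENNReal.ofReal_le_one]
      exact hχ.norm_le_one _
    rw [Set.indicator_of_mem hη, hc, ← mul_pow, enorm_smul, enorm_smul]
    gcongr
    exact mul_le_of_le_one_left zero_le hw
  · have hj : (2 : ℝ) ^ (-j) ≤ 2 ^ (-k) := zpow_le_zpow_right₀ one_le_two (neg_le_neg hkj)
    have hzero : shellMultiplier p χ j η = 0 := by
      by_contra hne
      exact hη (Set.Ioo_subset_Ioo_left (by linarith) (support_shellMultiplier_subset hχ hne))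
    simp [hzero]

theorem eLpNorm_sum_fourierInv_shellMultiplier_sq_le {s : Set V} (hs : Convex ℝ s)
    (hb : Bornology.IsBounded s) (h0 : s ∈ 𝓝 0) {M : ℕ} {χ : ℤ → ℝ → ℂ}
    (hχ : ∀ k, MemYM M (χ k)) {f : ℤ → V → ℂ} (hf : ∀ k, Integrable (f k)) (I : Finset ℤ)
    (c : ℤ → ℝ) (n : ℕ) :
    eLpNorm (fun x => ∑ k ∈ I, c k •
        𝓕⁻ (fun η => shellMultiplier (gauge s) (χ k) (k + n) η • 𝓕 (f k) η) x) 2 volume ^ 2 ≤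
      2 * ∑ k ∈ I, ENNReal.ofReal (c k ^ 2) *
        ∫⁻ η in gauge s ⁻¹' Set.Ioo (1 - 2 * (2 : ℝ) ^ (-k)) 1, ‖𝓕 (f k) η‖ₑ ^ 2 := by
  have hgauge : Continuous (gauge s) := continuous_gauge hs h0
  let G : ℤ → V → ℂ := fun k η =>
    c k • (shellMultiplier (gauge s) (χ k) (k + n) η • 𝓕 (f k) η)
  have hG : ∀ k x, c k • 𝓕⁻ (fun η => shellMultiplier (gauge s) (χ k) (k + n) η • 𝓕 (f k) η) x =
      𝓕⁻ (G k) x := fun k x => by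
    simp_rw [G, Real.fourierInv_eq, smul_comm _ (c k), integral_smul]
  have hGc : ∀ k ∈ I, Continuous (G k) := fun k _ =>
    ((continuous_shellMultiplier (j := k + n) hgauge (hχ k)).smul
      (continuous_fourier (hf k))).const_smul (c k)
  have hGs : ∀ k ∈ I, HasCompactSupport (G k) := fun k _ =>
    (hasCompactSupport_shellMultiplier_gauge hs hb h0 (hχ k)).smul_right.comp_left (smul_zero _)
  have hoverlap : ∀ η, (I.filter fun k => G k η ≠ 0).card ≤ 2 := fun η => by
    refine (Finset.card_le_card (Finset.monotone_filter_right I fun k _ hne => ?_)).trans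
      (card_filter_zpow_mul_mem_Ioo_le_two I (2 ^ n * (1 - gauge s η)))
    have hne' : shellMultiplier (gauge s) (χ k) (k + n) η ≠ 0 := fun h => hne (by simp [G, h])
    have := zpow_mul_one_sub_mem_Ioo_of_shellMultiplier_ne_zero (hχ k) hne'
    rwa [zpow_add₀ two_ne_zero, zpow_natCast, mul_assoc] at this
  simp_rw [hG]
  refine (eLpNorm_sum_fourierInv_sq_le hGc hGs hoverlap).trans
    (mul_le_mul_right (Finset.sum_le_sum fun k _ => ?_) _)
  exact lintegral_enorm_shellMultiplier_mul_sq_le hgauge (hχ k) (by lia) (c k) (𝓕 (f k))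

end ShellEstimates

section Main

open scoped Pointwise

variable {d : ℕ}

theorem exists_setLIntegral_shell_enorm_fourier_sq_le [NeZero d] {s : Set (Euc d)}
    (hs : Convex ℝ s) (hb : Bornology.IsBounded s) (h0 : s ∈ 𝓝 0) :
    ∃ C : ℝ≥0, ∀ {𝔔 : Finset (DyadicCube d)} {F : DyadicCube d → Euc d → ℂ} {k : ℤ},
      0 ≤ k → ∀ {f : Euc d → ℂ}, Integrable f → (∀ y, ‖f y‖ₑ ≤ ‖generationSum 𝔔 F k y‖ₑ) →
        ∫⁻ ξ in gauge s ⁻¹' Set.Ioo (1 - 2 * (2 : ℝ) ^ (-k)) 1, ‖𝓕 f ξ‖ₑ ^ 2 ≤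
          C * ENNReal.ofReal (((2 : ℝ) ^ (-k)) ^ (d + 1)) *
            (dyadicMeasure (generation 𝔔 k) * supLp 1 𝔔 F ^ 2) := by
  obtain ⟨C, hC⟩ := IsPacking.exists_volume_mul_setLIntegral_gauge_annulus_le hs hb h0 √d
  refine ⟨C, fun {𝔔 F k} hk {f} hf hfg => ?_⟩
  have hscale : (2 : ℝ) ^ (-k) * 2 ^ k = 1 := by
    rw [zpow_neg, inv_mul_cancel₀ (by positivity)]
  have hunit : ENNReal.ofReal (((2 : ℝ) ^ (-k)) ^ d) * ENNReal.ofReal (((2 : ℝ) ^ k) ^ d) = 1 := by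
    rw [← ENNReal.ofReal_mul (by positivity), ← mul_pow, hscale, one_pow, ENNReal.ofReal_one]
  have hsupp : Function.support f ⊆ ⋃ Q ∈ generation 𝔔 k, Q.set :=
    fun y hy => support_generationSum_subset (F := F) fun h =>
      hy (by simpa only [h, enorm_zero, nonpos_iff_eq_zero, enorm_eq_zero] using hfg y)
  have key := hC (isPacking_generation 𝔔 k) hf hsupp (A := supLp 1 𝔔 F)
    (fun Q hQ => (lintegral_mono hfg).trans (setLIntegral_enorm_generationSum_le hQ))
    (r := (2 : ℝ) ^ (-k)) (by positivity) (zpow_le_one_of_nonpos₀ one_le_two (by lia))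
    (by rw [mul_left_comm, hscale, mul_one])
  rw [finrank_euclideanSpace_fin, hunit, one_mul] at key
  calc _ ≤ _ := key
    _ = C * ENNReal.ofReal ((2 : ℝ) ^ (-k)) * ((generation 𝔔 k).card *
          (ENNReal.ofReal (((2 : ℝ) ^ (-k)) ^ d) * ENNReal.ofReal (((2 : ℝ) ^ k) ^ d)) *
            supLp 1 𝔔 F ^ 2) := by rw [hunit, mul_one]
    _ = _ := by
      rw [dyadicMeasure_generation, pow_succ ((2 : ℝ) ^ (-k)), ENNReal.ofReal_mul (by positivity)]
      ring

theorem shellMultiplier_gauge_smul {E : Type*} [AddCommGroup E] [Module ℝ E] {s : Set E}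
    {a : ℝ} (ha : 0 < a) (χ : ℝ → ℂ) (j : ℤ) (η : E) :
    shellMultiplier (gauge s) χ j (a • η) = shellMultiplier (gauge (a⁻¹ • s)) χ j η := by
  rw [shellMultiplier, shellMultiplier, gauge_smul_of_nonneg ha.le,
    gauge_smul_left_of_nonneg (inv_nonneg.2 ha.le), inv_inv, Pi.smul_apply]

theorem ofReal_sq_mul_ofReal_zpow_neg_pow_le {c B : ℝ} {k : ℤ}
    (hc : |c| ≤ B * (2 : ℝ) ^ ((k : ℝ) * ((d : ℝ) + 1) / 2)) :
    ENNReal.ofReal (c ^ 2) * ENNReal.ofReal (((2 : ℝ) ^ (-k)) ^ (d + 1)) ≤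
      ENNReal.ofReal (B ^ 2) := by
  rw [← ENNReal.ofReal_mul (sq_nonneg c)]
  refine ENNReal.ofReal_le_ofReal ?_
  have hpow : ((2 : ℝ) ^ ((k : ℝ) * ((d : ℝ) + 1) / 2)) ^ 2 * ((2 : ℝ) ^ (-k)) ^ (d + 1) = 1 := by
    rw [← Real.rpow_intCast, ← Real.rpow_mul_natCast two_pos.le,
      ← Real.rpow_mul_natCast two_pos.le, ← Real.rpow_add two_pos]
    push_cast
    ring_nf
    exact Real.rpow_zero 2
  calc c ^ 2 * ((2 : ℝ) ^ (-k)) ^ (d + 1)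
      ≤ (B * (2 : ℝ) ^ ((k : ℝ) * ((d : ℝ) + 1) / 2)) ^ 2 * ((2 : ℝ) ^ (-k)) ^ (d + 1) := by
        rw [← sq_abs c]
        gcongr
    _ = B ^ 2 := by rw [mul_pow, mul_assoc, hpow, mul_one]

theorem exists_eLpNorm_sum_fourierInv_shellMultiplier_sq_le [NeZero d] {s : Set (Euc d)}
    (hs : Convex ℝ s) (hb : Bornology.IsBounded s) (h0 : s ∈ 𝓝 0) :
    ∃ C : ℝ≥0, ∀ {I : Finset ℤ} {n M : ℕ} {χ : ℤ → ℝ → ℂ} {c : ℤ → ℝ} {B : ℝ}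
      {𝔔 : Finset (DyadicCube d)} {F : DyadicCube d → Euc d → ℂ} {f : ℤ → Euc d → ℂ},
      (∀ k ∈ I, 0 ≤ k) → (∀ k, MemYM M (χ k)) →
      (∀ k ∈ I, |c k| ≤ B * (2 : ℝ) ^ ((k : ℝ) * ((d : ℝ) + 1) / 2)) →
      (∀ k, Integrable (f k)) → (∀ k y, ‖f k y‖ₑ ≤ ‖generationSum 𝔔 F k y‖ₑ) →
      eLpNorm (fun x => ∑ k ∈ I, c k •
          𝓕⁻ (fun η => shellMultiplier (gauge s) (χ k) (k + n) η • 𝓕 (f k) η) x) 2 volume ^ 2 ≤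
        C * ENNReal.ofReal (B ^ 2) * dyadicMeasure 𝔔 * supLp 1 𝔔 F ^ 2 := by
  obtain ⟨C, hC⟩ := exists_setLIntegral_shell_enorm_fourier_sq_le hs hb h0
  refine ⟨2 * C, fun {I n M χ c B 𝔔 F f} hI hχ hc hf hfg => ?_⟩
  have hshell : ∀ k ∈ I, ENNReal.ofReal (c k ^ 2) *
      ∫⁻ η in gauge s ⁻¹' Set.Ioo (1 - 2 * (2 : ℝ) ^ (-k)) 1, ‖𝓕 (f k) η‖ₑ ^ 2 ≤
      C * ENNReal.ofReal (B ^ 2) * supLp 1 𝔔 F ^ 2 * dyadicMeasure (generation 𝔔 k) :=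
    fun k hk => calc
      _ ≤ ENNReal.ofReal (c k ^ 2) * (C * ENNReal.ofReal (((2 : ℝ) ^ (-k)) ^ (d + 1)) *
            (dyadicMeasure (generation 𝔔 k) * supLp 1 𝔔 F ^ 2)) :=
          mul_le_mul_right (hC (hI k hk) (hf k) (hfg k)) _
      _ = C * (ENNReal.ofReal (c k ^ 2) * ENNReal.ofReal (((2 : ℝ) ^ (-k)) ^ (d + 1))) *
            supLp 1 𝔔 F ^ 2 * dyadicMeasure (generation 𝔔 k) := by ring
      _ ≤ _ := by
          gcongr
          exact ofReal_sq_mul_ofReal_zpow_neg_pow_le (hc k hk)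
  refine (eLpNorm_sum_fourierInv_shellMultiplier_sq_le hs hb h0 hχ hf I c n).trans ?_
  calc _ ≤ 2 * ∑ k ∈ I, C * ENNReal.ofReal (B ^ 2) * supLp 1 𝔔 F ^ 2 *
        dyadicMeasure (generation 𝔔 k) := mul_le_mul_right (Finset.sum_le_sum hshell) _
    _ ≤ 2 * (C * ENNReal.ofReal (B ^ 2) * supLp 1 𝔔 F ^ 2 * dyadicMeasure 𝔔) := by
        rw [← Finset.mul_sum]
        gcongr
        exact sum_dyadicMeasure_generation_le 𝔔 I
    _ = _ := by
        push_cast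
        ring

theorem exists_eLpNorm_sum_mulOp_shellMultiplier_le [NeZero d] {Ω : Set (Euc d)}
    (hΩ : Convex ℝ Ω) (hb : Bornology.IsBounded Ω) (h0 : Ω ∈ 𝓝 0) :
    ∃ C : ℝ, 0 < C ∧ ∀ {I : Finset ℤ} {n : ℕ} {χ : ℤ → ℝ → ℂ} {c : ℤ → ℝ} {B : ℝ}
      {𝔔 : Finset (DyadicCube d)} {F : DyadicCube d → Euc d → ℂ}, (∀ k ∈ I, 0 ≤ k) →
      (∀ k, MemYM 0 (χ k)) → 0 < B →
      (∀ k ∈ I, |c k| ≤ B * (2 : ℝ) ^ ((k : ℝ) * ((d : ℝ) + 1) / 2)) →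
      eLpNorm (fun x => ∑ k ∈ I, c k •
          mulOp (shellMultiplier (gauge Ω) (χ k) (k + n)) (generationSum 𝔔 F k) x) 2 volume ≤
        ENNReal.ofReal (C * B) * dyadicMeasure 𝔔 ^ ((1 : ℝ) / 2) * supLp 1 𝔔 F := by
  have hπ : 0 < 2 * Real.pi := by positivity
  set s := (2 * Real.pi)⁻¹ • Ω
  have hs : Convex ℝ s := hΩ.smul _
  have hsb : Bornology.IsBounded s := hb.smul₀ _
  have hs0 : s ∈ 𝓝 0 := (set_smul_mem_nhds_zero_iff (inv_pos.2 hπ).ne').2 h0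
  obtain ⟨C, hC⟩ := exists_eLpNorm_sum_fourierInv_shellMultiplier_sq_le hs hsb hs0
  refine ⟨√(C + 1), by positivity, fun {I n χ c B 𝔔 F} hI hχ hB hc => ?_⟩
  by_cases hF : supLp 1 𝔔 F = ⊤
  · rw [mul_rpow_dyadicMeasure_mul_supLp_eq_top hF (by positivity) (by norm_num)]
    exact le_top
  choose f hf hfg hmul using fun k =>
    exists_integrable_mulOp_eq_fourierInv (hasFiniteIntegral_generationSum (k := k) hF)
  have hop : ∀ k, mulOp (shellMultiplier (gauge Ω) (χ k) (k + n)) (generationSum 𝔔 F k) =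
      𝓕⁻ fun η => shellMultiplier (gauge s) (χ k) (k + n) η • 𝓕 (f k) η := fun k => by
    have hcs := hasCompactSupport_shellMultiplier_gauge (j := k + n) hΩ hb h0 (hχ k)
    have hcont := continuous_shellMultiplier (j := k + n) (continuous_gauge hΩ h0) (hχ k)
    rw [hmul k _ (hcont.integrable_of_hasCompactSupport hcs) hcs]
    simp_rw [shellMultiplier_gauge_smul hπ, s]
  simp_rw [hop]
  refine (ENNReal.pow_le_pow_left_iff two_ne_zero).1 ((hC hI hχ hc hf hfg).trans ?_)
  rw [mul_pow, mul_pow, ← ENNReal.ofReal_pow (by positivity), mul_pow, Real.sq_sqrt (by positivity),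
    ← ENNReal.rpow_mul_natCast, ENNReal.ofReal_mul (by positivity),
    ENNReal.ofReal_add (by positivity) zero_le_one, ENNReal.ofReal_coe_nnreal]
  norm_num
  gcongr
  exact le_self_add

end Main

theorem christ_sogge_L2_general {d : ℕ} [NeZero d] {Ω : Set (Euc d)} (hΩ : Convex ℝ Ω)
    (hb : Bornology.IsBounded Ω) (h0 : Ω ∈ 𝓝 0) :
    ∃ C : ℝ, ∀ χ : ℕ → ℝ → ℂ, (∀ j, MemYM 0 (χ j)) →
      ∀ (𝔔 : Finset (DyadicCube d)) (F : DyadicCube d → Euc d → ℂ),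
      (∀ s : ℕ, eLpNorm (fun x => ∑ k ∈ (𝔔.image fun Q => Q.k).filter fun k => (s : ℤ) ≤ k,
          ((2 : ℝ) ^ (((k : ℝ) + (s : ℝ)) * ((d : ℝ) + 1) / 2)) •
            mulOp (shellMultiplier (gauge Ω) (χ (k + s).toNat) (k + s)) (generationSum 𝔔 F k) x)
          2 volume ≤ ENNReal.ofReal (C * (2 : ℝ) ^ ((s : ℝ) * ((d : ℝ) + 1) / 2)) *
            dyadicMeasure 𝔔 ^ ((1 : ℝ) / 2) * supLp 1 𝔔 F) ∧
      ∀ j L : ℕ, 2 * L ≤ j →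
        eLpNorm (fun x => ((2 : ℝ) ^ ((j : ℝ) * ((d : ℝ) + 1) / 2)) •
          mulOp (shellMultiplier (gauge Ω) (χ j) j) (generationSum 𝔔 F L) x) 2 volume ≤
            ENNReal.ofReal (C * (2 : ℝ) ^ ((j : ℝ) * (3 * (d : ℝ) + 1) / 4 - (L : ℝ) * (d : ℝ))) *
              dyadicMeasure 𝔔 ^ ((1 : ℝ) / 2) * supLp 1 𝔔 F := by
  obtain ⟨C, -, hC⟩ := exists_eLpNorm_sum_mulOp_shellMultiplier_le hΩ hb h0
  refine ⟨C, fun χ hχ 𝔔 F => ⟨fun s => ?_, fun j L hLj => ?_⟩⟩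
  · refine hC (I := (𝔔.image fun Q => Q.k).filter fun k => (s : ℤ) ≤ k)
      (χ := fun k => χ (k + s).toNat) (c := fun k => 2 ^ (((k : ℝ) + s) * ((d : ℝ) + 1) / 2))
      (fun k hk => s.cast_nonneg.trans (Finset.mem_filter.1 hk).2) (fun k => hχ _)
      (by positivity) fun k _ => ?_
    rw [abs_of_pos (by positivity), ← Real.rpow_add two_pos]
    ring_nf
    rfl
  · obtain ⟨n, rfl⟩ := Nat.exists_eq_add_of_le (show L ≤ j by lia)
    have hexp : |(2 : ℝ) ^ (((L + n : ℕ) : ℝ) * ((d : ℝ) + 1) / 2)| ≤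
        2 ^ (((L + n : ℕ) : ℝ) * (3 * (d : ℝ) + 1) / 4 - (L : ℝ) * (d : ℝ)) *
          2 ^ ((L : ℝ) * ((d : ℝ) + 1) / 2) := by
      have hd : (1 : ℝ) ≤ d := by exact_mod_cast NeZero.one_le
      have hLn : (L : ℝ) ≤ n := by exact_mod_cast (by lia : L ≤ n)
      rw [abs_of_pos (by positivity), ← Real.rpow_add two_pos]
      refine Real.rpow_le_rpow_of_exponent_le one_le_two ?_
      push_cast
      nlinarith
    simpa using hC (I := {(L : ℤ)}) (n := n) (χ := fun _ => χ (L + n))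
      (c := fun _ => 2 ^ (((L + n : ℕ) : ℝ) * ((d : ℝ) + 1) / 2)) (𝔔 := 𝔔) (F := F)
      (by simp) (fun _ => hχ _) (by positivity) (by simpa using hexp)

/-- Christ–Sogge type `L²` estimates for sums of bump multipliers of the
distance to the boundary, applied to functions on dyadic cubes. -/
theorem christ_sogge_L2
    (d : ℕ) (hd : 2 ≤ d) (Ω : Set (Euc d)) (ρ : Euc d → ℝ)
    (hρ : IsMinkowskiGauge d Ω ρ) (hcurv : HasNonvanishingCurvature d ρ) :
    ∃ (M : ℕ) (C : ℝ), 1 ≤ M ∧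
      ∀ χ : ℕ → ℝ → ℂ, (∀ j, MemYM M (χ j)) →
      ∀ 𝔔 : Finset (DyadicCube d), (∀ Q ∈ 𝔔, 0 ≤ Q.k) →
      ∀ F : DyadicCube d → Euc d → ℂ,
        (∀ s : ℕ,
          eLpNorm
              (fun x => Finset.sum
                  ((𝔔.image (fun Q => Q.k)).filter (fun kk => (s : ℤ) ≤ kk))
                  fun (kk : ℤ) =>
                ((2:ℝ) ^ (((kk : ℝ) + (s : ℝ)) * ((d : ℝ) + 1) / 2)) •
                  mulOp (fun ξ => χ (kk + (s : ℤ)).toNat ((2:ℝ) ^ (kk + (s : ℤ)) * (1 - ρ ξ)))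
                    (fun y => ∑ Q ∈ 𝔔.filter (fun Q' => Q'.k = kk),
                      Q.set.indicator (F Q) y) x)
              2 volume ≤
            ENNReal.ofReal (C * (2:ℝ) ^ ((s : ℝ) * ((d : ℝ) + 1) / 2)) *
              dyadicMeasure 𝔔 ^ ((1 : ℝ) / 2) * supLp 1 𝔔 F) ∧
        (∀ j L : ℕ, 0 < L → 2 * L ≤ j →
          eLpNorm
              (fun x => ((2:ℝ) ^ ((j : ℝ) * ((d : ℝ) + 1) / 2)) •
                mulOp (fun ξ => χ j ((2:ℝ) ^ (j : ℤ) * (1 - ρ ξ)))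
                  (fun y => ∑ Q ∈ 𝔔.filter (fun Q' => Q'.k = (L : ℤ)),
                    Q.set.indicator (F Q) y) x)
              2 volume ≤
            ENNReal.ofReal
                (C * (2:ℝ) ^ ((j : ℝ) * (3 * (d : ℝ) + 1) / 4 - (L : ℝ) * (d : ℝ))) *
              dyadicMeasure 𝔔 ^ ((1 : ℝ) / 2) * supLp 1 𝔔 F) := by
  have : NeZero d := ⟨by lia⟩
  obtain ⟨C, hC⟩ :=
    christ_sogge_L2_general hρ.convex hρ.isBounded (hρ.isOpen.mem_nhds hρ.zero_mem)
  rw [hρ.eq_gauge]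
  refine ⟨1, C, le_rfl, fun χ hχ 𝔔 _ F => ?_⟩
  obtain ⟨hi, hii⟩ := hC χ (fun j => (hχ j).mono zero_le_one) 𝔔 F
  exact ⟨hi, fun j L _ => hii j L⟩
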